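/- arXiv:2504.02065 — 13 statements merged into one kernel-verified Lean document; each statement's English description precedes it below -/
import Mathlib

section
/- Let G and H be finite simple graphs on disjoint vertex sets. The disjoint union G ⊔ H (the graph on V(G) ⊕ V(H) whose edges are exactly the edges of G together with the edges of H) is levelable if and only if both G and H are levelable. -/
/-!
An edge of `G ⊕g H` never joins the two sides, so the maximal independent sets of `G ⊕g H` are
exactly the sets `A ⊔ B` with `A` maximal independent in `G` and `B` maximal independent in `H`
(`SimpleGraph.isMaxIndepFinset_sum`). Levelling weights on `G` and `H` therefore combine to one on
`G ⊕g H`, with the constants added. Conversely, restrict a levelling weight of `G ⊕g H` to `G`: for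
a fixed maximal independent set `B` of `H`, which exists because `H` is finite, every `A` has weight
`k` minus the weight of `B`.
-/

open Finset

/-- A finite set of vertices is independent if no two of its vertices are adjacent. -/
def SimpleGraph.IsIndepFinset {V : Type*} (G : SimpleGraph V) (W : Finset V) : Prop :=
  ∀ u ∈ W, ∀ v ∈ W, ¬ G.Adj u v

/-- A finite set of vertices is a maximal independent set if it is independent and is not
properly contained in any other independent set. -/
def SimpleGraph.IsMaxIndepFinset {V : Type*} (G : SimpleGraph V) (W : Finset V) : Prop :=
  G.IsIndepFinset W ∧ ∀ U : Finset V, G.IsIndepFinset U → W ⊆ U → U = W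

/-- A graph is levelable if there is a weight function on the vertices, taking positive
integer values, such that all maximal independent sets have the same total weight. -/
def SimpleGraph.Levelable {V : Type*} (G : SimpleGraph V) : Prop :=
  ∃ (c : V → ℕ) (k : ℕ), (∀ v, 1 ≤ c v) ∧
    ∀ W : Finset V, G.IsMaxIndepFinset W → ∑ v ∈ W, c v = k

theorem SimpleGraph.isIndepFinset_sum {α β : Type*} (G : SimpleGraph α) (H : SimpleGraph β)
    (A : Finset α) (B : Finset β) :
    (G ⊕g H).IsIndepFinset (A.disjSum B) ↔ G.IsIndepFinset A ∧ H.IsIndepFinset B := by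
  simp [SimpleGraph.IsIndepFinset]

theorem SimpleGraph.isMaxIndepFinset_sum {α β : Type*} (G : SimpleGraph α) (H : SimpleGraph β)
    (A : Finset α) (B : Finset β) :
    (G ⊕g H).IsMaxIndepFinset (A.disjSum B) ↔ G.IsMaxIndepFinset A ∧ H.IsMaxIndepFinset B := by
  constructor
  · rintro ⟨hi, hm⟩
    obtain ⟨hA, hB⟩ := (isIndepFinset_sum G H A B).1 hi
    refine ⟨⟨hA, fun U hU hAU => ?_⟩, ⟨hB, fun U hU hBU => ?_⟩⟩
    · have := hm (U.disjSum B) ((isIndepFinset_sum G H U B).2 ⟨hU, hB⟩)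
        (disjSum_mono hAU subset_rfl)
      exact (disjSum_inj.1 this).1
    · have := hm (A.disjSum U) ((isIndepFinset_sum G H A U).2 ⟨hA, hU⟩)
        (disjSum_mono subset_rfl hBU)
      exact (disjSum_inj.1 this).2
  · rintro ⟨⟨hA, hmA⟩, ⟨hB, hmB⟩⟩
    refine ⟨(isIndepFinset_sum G H A B).2 ⟨hA, hB⟩, fun U hU hAB => ?_⟩
    rw [← toLeft_disjSum_toRight (u := U), isIndepFinset_sum] at hU
    obtain ⟨hl, hr⟩ := disjSum_subset.1 hAB
    exact eq_disjSum_iff.2 ⟨hmA _ hU.1 hl, hmB _ hU.2 hr⟩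

theorem SimpleGraph.exists_isMaxIndepFinset {V : Type*} [Finite V] (G : SimpleGraph V) :
    ∃ W, G.IsMaxIndepFinset W := by
  obtain ⟨W, hW⟩ := (Set.toFinite {W | G.IsIndepFinset W}).exists_maximal
    ⟨∅, by simp [SimpleGraph.IsIndepFinset]⟩
  exact ⟨W, hW.prop, fun U hU hWU => (hW.eq_of_le hU hWU).symm⟩

theorem disjoint_union_levelable_iff {α β : Type*} [Fintype α] [Fintype β]
    (G : SimpleGraph α) (H : SimpleGraph β) :
    (G ⊕g H).Levelable ↔ (G.Levelable ∧ H.Levelable) := by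
  constructor
  · rintro ⟨c, k, hc, hk⟩
    have key : ∀ A B, G.IsMaxIndepFinset A → H.IsMaxIndepFinset B →
        ∑ a ∈ A, c (.inl a) + ∑ b ∈ B, c (.inr b) = k := fun A B hA hB => by
      rw [← sum_disjSum]
      exact hk _ ((SimpleGraph.isMaxIndepFinset_sum G H A B).2 ⟨hA, hB⟩)
    obtain ⟨A₀, hA₀⟩ := G.exists_isMaxIndepFinset
    obtain ⟨B₀, hB₀⟩ := H.exists_isMaxIndepFinset
    -- Truncated subtraction is harmless: by `key`, neither subtracted sum exceeds `k`.
    exact ⟨⟨fun a => c (.inl a), k - ∑ b ∈ B₀, c (.inr b), fun a => hc _,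
        fun A hA => Nat.eq_sub_of_add_eq (key A B₀ hA hB₀)⟩,
      ⟨fun b => c (.inr b), k - ∑ a ∈ A₀, c (.inl a), fun b => hc _,
        fun B hB => Nat.eq_sub_of_add_eq' (key A₀ B hA₀ hB)⟩⟩
  · rintro ⟨⟨c, k, hc, hk⟩, ⟨d, l, hd, hl⟩⟩
    refine ⟨Sum.elim c d, k + l, by simpa using ⟨hc, hd⟩, fun W hW => ?_⟩
    rw [← toLeft_disjSum_toRight (u := W)] at hW ⊢
    obtain ⟨hA, hB⟩ := (SimpleGraph.isMaxIndepFinset_sum G H _ _).1 hW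
    simp only [sum_disjSum, Sum.elim_inl, Sum.elim_inr, hk _ hA, hl _ hB]
end

section
/- Let G be a finite simple graph such that any two distinct maximal independent sets of G are disjoint. Then G is levelable. -/
/-!
Every vertex extends to a maximal independent set, and by disjointness this set is unique, so
the maximal independent sets partition the vertices into blocks. With `N` the number of
vertices, give each vertex of a block `W` the weight `N! / #W`. Since `1 ≤ #W ≤ N`, this is a
positive integer, the division is exact, and every block has total weight `N!`.
-/

open Finset

theorem SimpleGraph.exists_isMaxIndepFinset_mem {V : Type*} [Fintype V] (G : SimpleGraph V)
    (v : V) : ∃ W : Finset V, G.IsMaxIndepFinset W ∧ v ∈ W := by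
  have hs : G.IsIndepFinset {v} := by simp [SimpleGraph.IsIndepFinset]
  obtain ⟨W, hvW, hW⟩ := (Set.toFinite {W : Finset V | G.IsIndepFinset W}).exists_le_maximal hs
  exact ⟨W, ⟨hW.prop, fun U hU hWU => (hW.eq_of_le hU hWU).symm⟩, hvW (mem_singleton_self v)⟩

theorem levelable_of_pairwise_disjoint_maxIndep {V : Type*} [Fintype V]
    (G : SimpleGraph V)
    (h : ∀ W₁ W₂ : Finset V, G.IsMaxIndepFinset W₁ → G.IsMaxIndepFinset W₂ →
      W₁ ≠ W₂ → Disjoint W₁ W₂) :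
    G.Levelable := by
  classical
  -- With no vertices, the empty set is maximal independent and has weight `0`, not `0!`.
  rcases isEmpty_or_nonempty V with hV | hV
  · exact ⟨fun _ => 1, 0, fun _ => le_rfl, fun W _ => by simp [W.eq_empty_of_isEmpty]⟩
  choose f hf hmem using G.exists_isMaxIndepFinset_mem
  have hle (v : V) : #(f v) ≤ Fintype.card V := card_le_univ _
  have hpos (v : V) : 0 < #(f v) := card_pos.2 ⟨v, hmem v⟩
  refine ⟨fun v => (Fintype.card V).factorial / #(f v), (Fintype.card V).factorial,
    fun v => Nat.div_pos ((hle v).trans (Nat.self_le_factorial _)) (hpos v), fun W hW => ?_⟩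
  have hfW (v : V) (hv : v ∈ W) : f v = W := by
    by_contra hne
    exact disjoint_left.1 (h _ _ (hf v) hW hne) (hmem v) hv
  obtain ⟨v, hv⟩ : W.Nonempty := by
    rw [nonempty_iff_ne_empty]
    rintro rfl
    obtain ⟨v⟩ := hV
    have := hW.2 (f v) (hf v).1 (empty_subset _)
    simpa [this] using hmem v
  have hdvd : #W ∣ (Fintype.card V).factorial :=
    Nat.dvd_factorial (card_pos.2 ⟨v, hv⟩) (card_le_univ _)
  calc ∑ v ∈ W, (Fintype.card V).factorial / #(f v)
      = ∑ _v ∈ W, (Fintype.card V).factorial / #W := sum_congr rfl fun v hv => by rw [hfW v hv]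
    _ = (Fintype.card V).factorial := by
      rw [sum_const, smul_eq_mul, Nat.mul_div_cancel' hdvd]
end

section
/- For every d ≥ 1 and positive integers a_1, …, a_d, the complete d-partite graph K_{a_1,…,a_d} (the completeMultipartiteGraph on d parts, where the i-th part has a_i vertices and two vertices are adjacent exactly when they lie in different parts) is levelable. -/
/-!
The maximal independent sets of a complete multipartite graph are exactly its parts. Giving every
vertex of the `i`-th part the weight `∏ j ≠ i, a j` makes each part weigh
`a i * ∏ j ≠ i, a j = ∏ j, a j`, which does not depend on `i`.
-/

open Finset

/-- A maximal independent set of a complete multipartite graph with at least one vertex is one of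
the parts. -/
theorem isMaxIndepFinset_completeMultipartiteGraph_eq_part {ι : Type*} {V : ι → Type*}
    [∀ i, Fintype (V i)] [Nonempty (Σ i, V i)] {W : Finset (Σ i, V i)}
    (hW : (SimpleGraph.completeMultipartiteGraph V).IsMaxIndepFinset W) :
    ∃ i, W = univ.map (Function.Embedding.sigmaMk i) := by
  obtain ⟨hind, hmax⟩ := hW
  have hne : W.Nonempty := by
    rw [Finset.nonempty_iff_ne_empty]
    rintro rfl
    obtain ⟨v⟩ := ‹Nonempty (Σ i, V i)›
    -- The empty set is properly contained in the independent set `{v}`.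
    have h := hmax {v} (by simp [SimpleGraph.IsIndepFinset]) (by simp)
    simp at h
  obtain ⟨w, hw⟩ := hne
  refine ⟨w.1, (hmax _ ?_ ?_).symm⟩
  · simp [SimpleGraph.IsIndepFinset]
  · intro u hu
    have h : u.1 = w.1 := by simpa using hind u hu w hw
    obtain ⟨j, x⟩ := u
    obtain rfl : j = w.1 := h
    simp

theorem completeMultipartiteGraph_levelable (d : ℕ) (hd : 1 ≤ d)
    (a : Fin d → ℕ) (ha : ∀ i, 1 ≤ a i) :
    (SimpleGraph.completeMultipartiteGraph (fun i : Fin d => Fin (a i))).Levelable := by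
  have : Nonempty (Σ i : Fin d, Fin (a i)) := ⟨⟨⟨0, hd⟩, ⟨0, ha _⟩⟩⟩
  refine ⟨fun v => ∏ j ∈ univ.erase v.1, a j, ∏ j, a j, fun v => ?_, fun W hW => ?_⟩
  · exact Nat.succ_le_of_lt <| Finset.prod_pos fun j _ => ha j
  · obtain ⟨i, rfl⟩ := isMaxIndepFinset_completeMultipartiteGraph_eq_part hW
    simp [Finset.mul_prod_erase]
end

section
/- Let G be a finite simple graph whose independence number α(G) (the maximum cardinality of an independent set of G) satisfies α(G) ≤ 2. Then G is levelable. -/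
/-!
Give weight `2` to every vertex adjacent to all the others and weight `1` to every other vertex.
If `V` is nonempty, a maximal independent set has one or two elements. A singleton `{v}` is maximal
exactly when `v` is adjacent to all other vertices, so it has weight `2`; in a pair `{a, b}` each
vertex is a non-neighbour of the other, so the weight is `1 + 1`. If `V` is empty, the only
maximal independent set is `∅`, and the common weight is `0`.
-/

open Finset

theorem levelable_of_indepNum_le_two {V : Type*} [Fintype V] (G : SimpleGraph V)
    (h : ∀ W : Finset V, G.IsIndepFinset W → W.card ≤ 2) :
    G.Levelable := by
  classical
  rcases isEmpty_or_nonempty V with hV | ⟨⟨x⟩⟩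
  · refine ⟨fun _ => 1, 0, fun _ => le_rfl, fun W _ => ?_⟩
    simp [Finset.eq_empty_of_isEmpty W]
  refine ⟨fun v => if ∀ u, u ≠ v → G.Adj v u then 2 else 1, 2, fun v => ?_, fun W hW => ?_⟩
  · dsimp only
    split_ifs <;> norm_num
  obtain ⟨hI, hM⟩ := hW
  have hc := h W hI
  interval_cases hn : W.card
  · rw [Finset.card_eq_zero] at hn
    subst hn
    have := hM {x} (by simp [SimpleGraph.IsIndepFinset]) (by simp)
    simp at this
  · obtain ⟨v, rfl⟩ := Finset.card_eq_one.mp hn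
    have hv : ∀ u, u ≠ v → G.Adj v u := by
      intro u hu
      by_contra hvu
      have := hM {v, u} (by simp [SimpleGraph.IsIndepFinset, hvu, G.adj_comm u v]) (by simp)
      have hmem : u ∈ ({v} : Finset V) := this ▸ (by simp)
      exact hu (by simpa using hmem)
    rw [Finset.sum_singleton, if_pos hv]
  · obtain ⟨a, b, hab, rfl⟩ := Finset.card_eq_two.mp hn
    have hadj : ¬ G.Adj a b := hI a (by simp) b (by simp)
    rw [Finset.sum_pair hab, if_neg fun H => hadj (H b hab.symm),
      if_neg fun H => hadj (H a hab).symm]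
end

section
/- For every n ≥ 3, the complement of the cycle graph C_n on n vertices is levelable. -/
/-!
Independent sets of the complement are the cliques of the cycle, so constant weight `1` works once
all maximal cliques of `C_n` have the same size. For `n = 3` the cycle is complete and the only
maximal clique is the whole vertex set. For `n ≥ 4` every vertex lies on an edge, so a maximal
clique has at least two vertices, and the cycle has no triangle
(`cycleGraph_no_triangle`), so it has exactly two.
-/

open Finset

theorem isIndepFinset_compl_iff {V : Type*} (G : SimpleGraph V) (W : Finset V) :
    Gᶜ.IsIndepFinset W ↔ ∀ u ∈ W, ∀ v ∈ W, u ≠ v → G.Adj u v := by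
  simp only [SimpleGraph.IsIndepFinset, SimpleGraph.compl_adj]
  grind

/-- The differences `u - v`, `v - w`, `w - u` along a triangle are each `±1` and sum to zero, which
would force `1 = 0` or `3 = 0` in `ℤ/(m+4)`. -/
theorem cycleGraph_no_triangle (m : ℕ) (u v w : Fin (m + 4))
    (huv : (SimpleGraph.cycleGraph (m + 4)).Adj u v)
    (huw : (SimpleGraph.cycleGraph (m + 4)).Adj u w)
    (hvw : (SimpleGraph.cycleGraph (m + 4)).Adj v w) : False := by
  rw [SimpleGraph.cycleGraph_adj] at huv huw hvw
  have h1 : (1 : Fin (m + 4)) ≠ 0 := by simp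
  have h3 : (1 : Fin (m + 4)) + 1 + 1 ≠ 0 := by
    simp only [ne_eq, Fin.ext_iff, Fin.val_add, Fin.val_one, Fin.val_zero]
    rw [Nat.mod_eq_of_lt (a := 1 + 1) (by omega), Nat.mod_eq_of_lt (by omega)]
    omega
  have e : (u - v) + (v - w) = u - w := by abel
  have e1 : v - u = -(u - v) := by abel
  have e2 : w - v = -(v - w) := by abel
  have e3 : w - u = -(u - w) := by abel
  rw [e1] at huv
  rw [e2] at hvw
  rw [e3, ← e] at huw
  generalize u - v = a at *
  generalize v - w = b at *
  rw [neg_eq_iff_eq_neg] at huv hvw huw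
  rcases huv with rfl | rfl <;> rcases hvw with rfl | rfl <;> rcases huw with h | h
  · exact h1 (by simp at h)
  · exact h3 (by rw [h]; simp)
  · exact h1 (by simpa using h.symm)
  · exact h1 (by simpa using h.symm)
  · exact h1 (by simpa using h.symm)
  · exact h1 (by simpa using h.symm)
  · exact h3 (by nth_rewrite 3 [← h]; abel)
  · exact h1 (by simp at h)

/-- In a triangle-free graph without isolated vertices the maximal cliques are the edges. -/
theorem card_eq_two_of_no_triangle {V : Type*} [DecidableEq V] [Nonempty V] (G : SimpleGraph V)
    (hnb : ∀ u, ∃ v, G.Adj u v)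
    (htri : ∀ u v w, G.Adj u v → G.Adj u w → G.Adj v w → False)
    (W : Finset V) (hW : Gᶜ.IsMaxIndepFinset W) : W.card = 2 := by
  obtain ⟨hi, hmax⟩ := hW
  rw [isIndepFinset_compl_iff] at hi
  simp only [isIndepFinset_compl_iff] at hmax
  -- A set with at most one vertex is contained in an edge.
  have key : ∀ u, ¬ W ⊆ {u} := by
    intro u hu
    obtain ⟨v, hv⟩ := hnb u
    have h := hmax {u, v} (by have := hv.symm; simp; grind)
      (hu.trans (by simp))
    rw [← h] at hu
    have : v ∈ ({u} : Finset V) := hu (by simp)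
    exact hv.ne (Finset.mem_singleton.mp this).symm
  refine le_antisymm ?_ ?_
  · by_contra! h
    obtain ⟨a, b, c, ha, hb, hc, hab, hac, hbc⟩ := Finset.two_lt_card_iff.mp h
    exact htri a b c (hi a ha b hb hab) (hi a ha c hc hac) (hi b hb c hc hbc)
  · by_contra! h
    obtain ⟨u, hu⟩ := Finset.card_le_one_iff_subset_singleton.mp (by omega : W.card ≤ 1)
    exact key u hu

theorem compl_cycleGraph_levelable (n : ℕ) (hn : 3 ≤ n) :
    (SimpleGraph.cycleGraph n)ᶜ.Levelable := by
  obtain rfl | hn4 := hn.eq_or_lt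
  · refine ⟨fun _ => 1, 3, fun _ => le_rfl, fun W hW => ?_⟩
    have h := hW.2 Finset.univ
      (by rw [isIndepFinset_compl_iff]; simp [SimpleGraph.cycleGraph_three_eq_top])
      (Finset.subset_univ W)
    simp [← h]
  · obtain ⟨m, rfl⟩ := Nat.exists_eq_add_of_le' (show 4 ≤ n from hn4)
    refine ⟨fun _ => 1, 2, fun _ => le_rfl, fun W hW => ?_⟩
    rw [← Finset.card_eq_sum_ones]
    refine card_eq_two_of_no_triangle _ (fun u => ⟨u + 1, ?_⟩) (cycleGraph_no_triangle m) W hW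
    rw [SimpleGraph.cycleGraph_adj]
    exact Or.inr (add_sub_cancel_left u 1)
end

section
/- Let G be a finite simple graph. Suppose there exist maximal independent sets F_1, F_2, F_3, F_4 of G such that F_3 ∪ F_4 is a proper subset of F_1 ∪ F_2 and F_3 ∩ F_4 = ∅. Then G is not levelable. -/
open Finset

theorem not_levelable_of_obstruction {V : Type*} [Fintype V] [DecidableEq V]
    (G : SimpleGraph V) (F₁ F₂ F₃ F₄ : Finset V)
    (h₁ : G.IsMaxIndepFinset F₁) (h₂ : G.IsMaxIndepFinset F₂)
    (h₃ : G.IsMaxIndepFinset F₃) (h₄ : G.IsMaxIndepFinset F₄)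
    (hsub : F₃ ∪ F₄ ⊂ F₁ ∪ F₂) (hdisj : F₃ ∩ F₄ = ∅) :
    ¬ G.Levelable := by
  rintro ⟨c, k, hc, hk⟩
  -- Positivity of `c` makes the weight strictly monotone under proper inclusion.
  obtain ⟨v, hv, hv'⟩ := exists_of_ssubset hsub
  have hlt : ∑ v ∈ F₃ ∪ F₄, c v < ∑ v ∈ F₁ ∪ F₂, c v :=
    sum_lt_sum_of_subset hsub.subset hv hv' (hc v) fun _ _ _ => Nat.zero_le _
  -- Inclusion-exclusion: `F₃ ∪ F₄` weighs exactly `2k`, while `F₁ ∪ F₂` weighs at most `2k`.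
  have h12 := sum_union_inter (s₁ := F₁) (s₂ := F₂) (f := c)
  have h34 := sum_union_inter (s₁ := F₃) (s₂ := F₄) (f := c)
  rw [hk _ h₁, hk _ h₂] at h12
  rw [hk _ h₃, hk _ h₄, hdisj, sum_empty] at h34
  omega
end

section
/- For every n ≥ 2, the path graph P_n on n vertices is levelable if and only if n ∈ {2, 3, 4}. -/
/-!
If `n ≥ 5` and all maximal independent sets of the path on `0, …, n - 1` had weight `k`, compare
* `{0, 3, 5, 7, …}` with `{1, 3, 5, 7, …}`, which gives `c 0 = c 1`;
* `{0, 2, 4, 6, …}` with `{1, 4, 6, 8, …}`, which gives `c 0 + c 2 = c 1`.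

Hence `c 2 = 0`, contradicting positivity. For `n = 2, 3, 4` the weights `(1, 1)`, `(1, 2, 1)`,
`(1, 1, 1, 1)` level the path. In both directions, maximality is used in the form of domination
(`isMaxIndepFinset_iff`).
-/

open Finset

/-- A maximal independent set is the same thing as an independent dominating set. -/
theorem SimpleGraph.isMaxIndepFinset_iff {V : Type*} (G : SimpleGraph V) (W : Finset V) :
    G.IsMaxIndepFinset W ↔ G.IsIndepFinset W ∧ ∀ v, v ∉ W → ∃ u ∈ W, G.Adj u v := by
  classical
  refine and_congr_right fun hW => ⟨fun h v hv => ?_, fun h U hU hWU => ?_⟩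
  · by_contra! hc
    refine hv ?_
    rw [← h (insert v W) ?_ (Finset.subset_insert v W)]
    · exact Finset.mem_insert_self v W
    · intro a ha b hb hab
      rw [Finset.mem_insert] at ha hb
      rcases ha with rfl | ha <;> rcases hb with rfl | hb
      · exact G.irrefl hab
      · exact hc b hb hab.symm
      · exact hc a ha hab
      · exact hW a ha b hb hab
  · refine (Finset.Subset.antisymm hWU fun v hv => ?_).symm
    by_contra hvW
    obtain ⟨u, hu, huv⟩ := h v hvW
    exact hU u (hWU hu) v hv huv

/-- A sufficient condition for a set of vertices of a path, given by a predicate on the vertex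
numbers, to be maximal independent: no two consecutive members, and every non-member is next to
a member. -/
theorem isMaxIndepFinset_pathGraph {n : ℕ} (W : Finset (Fin n)) (p : ℕ → Prop)
    (hW : ∀ v : Fin n, v ∈ W ↔ p v) (h₁ : ∀ i, p i → ¬ p (i + 1))
    (h₂ : ∀ i < n, ¬ p i → (∃ j, j + 1 = i ∧ p j) ∨ (i + 1 < n ∧ p (i + 1))) :
    (SimpleGraph.pathGraph n).IsMaxIndepFinset W := by
  rw [SimpleGraph.isMaxIndepFinset_iff]
  refine ⟨fun u hu v hv huv => ?_, fun v hv => ?_⟩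
  · rw [hW] at hu hv
    rcases SimpleGraph.pathGraph_adj.1 huv with h | h
    · exact h₁ _ hu (h ▸ hv)
    · exact h₁ _ hv (h ▸ hu)
  · rw [hW] at hv
    rcases h₂ v v.2 hv with ⟨j, hj, hp⟩ | ⟨hlt, hp⟩
    · exact ⟨⟨j, by omega⟩, (hW _).2 hp, SimpleGraph.pathGraph_adj.2 (Or.inl hj)⟩
    · exact ⟨⟨v + 1, hlt⟩, (hW _).2 hp, SimpleGraph.pathGraph_adj.2 (Or.inr rfl)⟩

theorem not_levelable_pathGraph {n : ℕ} (hn : 5 ≤ n) :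
    ¬ (SimpleGraph.pathGraph n).Levelable := by
  rintro ⟨c, k, hc, hk⟩
  let E : Finset (Fin n) := Finset.univ.filter fun v => v.val % 2 = 0 ∧ 4 ≤ v.val
  let O : Finset (Fin n) := Finset.univ.filter fun v => v.val % 2 = 1 ∧ 3 ≤ v.val
  let a : Fin n := ⟨0, by omega⟩
  let b : Fin n := ⟨1, by omega⟩
  let d : Fin n := ⟨2, by omega⟩
  have key₁ := hk (insert a O) (isMaxIndepFinset_pathGraph _
    (fun i => i = 0 ∨ (i % 2 = 1 ∧ 3 ≤ i)) (by simp [O, a, Fin.ext_iff]) (by intro i; omega)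
    (by
      intro i hi hp
      rcases i with _ | i
      · omega
      · by_cases h : i + 1 = 2
        · right; omega
        · left; exact ⟨i, rfl, by omega⟩))
  have key₂ := hk (insert b O) (isMaxIndepFinset_pathGraph _
    (fun i => i = 1 ∨ (i % 2 = 1 ∧ 3 ≤ i)) (by simp [O, b, Fin.ext_iff]) (by intro i; omega)
    (by
      intro i hi hp
      rcases i with _ | i
      · right; omega
      · left; exact ⟨i, rfl, by omega⟩))
  have key₃ := hk (insert a (insert d E)) (isMaxIndepFinset_pathGraph _
    (fun i => i = 0 ∨ i = 2 ∨ (i % 2 = 0 ∧ 4 ≤ i)) (by simp [E, a, d, Fin.ext_iff])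
    (by intro i; omega)
    (by
      intro i hi hp
      rcases i with _ | i
      · omega
      · left; exact ⟨i, rfl, by omega⟩))
  have key₄ := hk (insert b E) (isMaxIndepFinset_pathGraph _
    (fun i => i = 1 ∨ (i % 2 = 0 ∧ 4 ≤ i)) (by simp [E, b, Fin.ext_iff]) (by intro i; omega)
    (by
      intro i hi hp
      rcases i with _ | i
      · right; omega
      · by_cases h : i + 1 = 3
        · right; omega
        · left; exact ⟨i, rfl, by omega⟩))
  rw [Finset.sum_insert (by simp [O, a])] at key₁
  rw [Finset.sum_insert (by simp [O, b])] at key₂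
  rw [Finset.sum_insert (by simp [E, a, d]), Finset.sum_insert (by simp [E, d])] at key₃
  rw [Finset.sum_insert (by simp [E, b])] at key₄
  have := hc d
  omega

theorem pathGraph_levelable_iff (n : ℕ) (hn : 2 ≤ n) :
    (SimpleGraph.pathGraph n).Levelable ↔ n ∈ ({2, 3, 4} : Set ℕ) := by
  constructor
  · intro h
    by_contra hmem
    simp only [Set.mem_insert_iff, Set.mem_singleton_iff] at hmem
    exact not_levelable_pathGraph (by omega) h
  · rintro (rfl | rfl | rfl)
    · refine ⟨![1, 1], 1, by decide, ?_⟩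
      simp only [SimpleGraph.isMaxIndepFinset_iff, SimpleGraph.IsIndepFinset,
        SimpleGraph.pathGraph_adj]
      decide
    · refine ⟨![1, 2, 1], 2, by decide, ?_⟩
      simp only [SimpleGraph.isMaxIndepFinset_iff, SimpleGraph.IsIndepFinset,
        SimpleGraph.pathGraph_adj]
      decide
    · refine ⟨![1, 1, 1, 1], 2, by decide, ?_⟩
      simp only [SimpleGraph.isMaxIndepFinset_iff, SimpleGraph.IsIndepFinset,
        SimpleGraph.pathGraph_adj]
      decide
end

section
/- Let n ≥ 1, let c_1, …, c_n be positive integers, and let r_1, …, r_n be integers with r_i ≥ 2 for all i. Then there exists a connected simple graph G' on the vertex set Σ_{i=1}^n {1, …, r_i} (with r_1 + ⋯ + r_n vertices) such that G' is weighted well-covered with respect to the weight function assigning the weight c_i to each of the r_i vertices in the i-th block; that is, there exists k ∈ ℕ with ∑_{v ∈ W} w(v) = k for every maximal independent set W of G', where w assigns c_i to every vertex of the i-th block. -/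
/-!
Make every block a clique, and join any two vertices of different blocks whose positions in
their blocks are both nonzero. The vertex at position `0` of a block is then adjacent only to
its own block, so a maximal independent set meets every block (otherwise that vertex could be
added), and it meets it only once since blocks are cliques. Its weight is thus `∑ i, c i`.
Because every block has a vertex at position `1`, and these are pairwise adjacent, the graph is
connected.
-/

open Finset

/-- The graph on a disjoint union of blocks `Fin (r i)` in which distinct vertices are adjacent
if they lie in the same block or both have nonzero position in their blocks. -/
def blockGraph {n : ℕ} (r : Fin n → ℕ) : SimpleGraph (Σ i : Fin n, Fin (r i)) where
  Adj u v := u ≠ v ∧ (u.1 = v.1 ∨ (u.2.val ≠ 0 ∧ v.2.val ≠ 0))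
  symm := ⟨fun _ _ h => ⟨h.1.symm, h.2.imp Eq.symm And.symm⟩⟩
  loopless := ⟨fun _ h => h.1 rfl⟩

lemma blockGraph_connected {n : ℕ} (hn : 1 ≤ n) (r : Fin n → ℕ) (hr : ∀ i, 2 ≤ r i) :
    (blockGraph r).Connected := by
  -- Every vertex reaches the hub at position `1` of block `0`, via position `1` of its own block.
  let p : ∀ i : Fin n, Σ i : Fin n, Fin (r i) := fun i => ⟨i, ⟨1, hr i⟩⟩
  have reach : ∀ u v, (u.1 = v.1 ∨ (u.2.val ≠ 0 ∧ v.2.val ≠ 0)) →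
      (blockGraph r).Reachable u v := by
    intro u v h
    by_cases huv : u = v
    · rw [huv]
    · exact SimpleGraph.Adj.reachable (G := blockGraph r) ⟨huv, h⟩
  have key : ∀ u, (blockGraph r).Reachable u (p ⟨0, hn⟩) := fun u =>
    (reach u (p u.1) (Or.inl rfl)).trans
      (reach _ _ (Or.inr ⟨one_ne_zero, one_ne_zero⟩))
  haveI : Nonempty (Σ i : Fin n, Fin (r i)) := ⟨p ⟨0, hn⟩⟩
  exact ⟨fun u v => (key u).trans (key v).symm⟩

/-- The vertex at position `0` of a block has all its neighbours in that block, so a maximal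
independent set cannot avoid the block. -/
lemma exists_mem_block {n : ℕ} (r : Fin n → ℕ) (hr : ∀ i, 2 ≤ r i)
    {W : Finset (Σ i : Fin n, Fin (r i))} (hW : (blockGraph r).IsMaxIndepFinset W) (i : Fin n) :
    ∃ v ∈ W, v.1 = i := by
  by_contra! h
  let z : Σ i : Fin n, Fin (r i) := ⟨i, ⟨0, by have := hr i; omega⟩⟩
  have hz : ∀ v ∈ W, ¬ (blockGraph r).Adj z v := by
    rintro v hv ⟨-, h1 | h2⟩
    · exact h v hv h1.symm
    · exact h2.1 rfl
  have hind : (blockGraph r).IsIndepFinset (insert z W) := by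
    intro u hu v hv
    rcases Finset.mem_insert.1 hu with rfl | hu <;> rcases Finset.mem_insert.1 hv with rfl | hv
    · exact (blockGraph r).irrefl
    · exact hz v hv
    · exact fun ha => hz u hu ha.symm
    · exact hW.1 u hu v hv
  have heq := hW.2 _ hind (Finset.subset_insert _ _)
  exact h z (heq ▸ Finset.mem_insert_self z W) rfl

theorem exists_connected_weighted_wellCovered (n : ℕ) (hn : 1 ≤ n)
    (c r : Fin n → ℕ) (hc : ∀ i, 1 ≤ c i) (hr : ∀ i, 2 ≤ r i) :
    ∃ G' : SimpleGraph (Σ i : Fin n, Fin (r i)), G'.Connected ∧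
      ∃ k : ℕ, ∀ W : Finset (Σ i : Fin n, Fin (r i)),
        G'.IsMaxIndepFinset W → ∑ v ∈ W, c v.1 = k := by
  refine ⟨blockGraph r, blockGraph_connected hn r hr, ∑ i, c i, fun W hW => ?_⟩
  -- The block index is a bijection from `W` onto the set of all blocks.
  refine Finset.sum_nbij Sigma.fst (fun _ _ => Finset.mem_univ _) ?_ ?_ (fun _ _ => rfl)
  · intro u hu v hv huv
    by_contra hne
    exact hW.1 u hu v hv ⟨hne, Or.inl huv⟩
  · intro i _
    obtain ⟨v, hv, hvi⟩ := exists_mem_block r hr hW i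
    exact ⟨v, hv, hvi⟩
end

section
/- Let c_1, …, c_n be positive integers. Then there exists a connected simple graph G on a vertex set of size N = n + c_1 + ⋯ + c_n, say V = {x_1, …, x_n} ⊕ Σ_{i=1}^n {1, …, c_i}, such that G is weighted well-covered with respect to the weight function assigning weight c_i to x_i for 1 ≤ i ≤ n and weight 1 to every remaining vertex; that is, there exists k ∈ ℕ with ∑_{v ∈ W} w(v) = k for every maximal independent set W of G. -/
/-!
The graph is a complete graph on the `x i` with `c i` pendant vertices ("whiskers") attached to
each `x i`. The only neighbour of a whisker at `x i` is `x i` itself, so a maximal independent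
set contains, for every `i`, either `x i` or all the whiskers at `x i`, and never both
(`whisker_mem_iff`). Either way the block of `i` contributes weight `c i`, so every maximal
independent set has total weight `∑ i, c i`.
-/

open Finset

/-- The complete graph on `Fin n` with `c i` pendant vertices attached to the vertex `i`. -/
def whiskeredComplete {n : ℕ} (c : Fin n → ℕ) :
    SimpleGraph (Fin n ⊕ Σ i : Fin n, Fin (c i)) where
  Adj
    | .inl i, .inl j => i ≠ j
    | .inl i, .inr p => i = p.1
    | .inr p, .inl i => i = p.1
    | .inr _, .inr _ => False
  symm := ⟨by
    rintro (i | p) (j | q) h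
    · exact Ne.symm h
    all_goals exact h⟩
  loopless := ⟨by
    rintro (i | p) h
    · exact h rfl
    · exact h⟩

theorem whiskeredComplete_connected {n : ℕ} (hn : 1 ≤ n) (c : Fin n → ℕ) :
    (whiskeredComplete c).Connected := by
  have key : ∀ v, (whiskeredComplete c).Reachable (.inl ⟨0, hn⟩) v := by
    have hl : ∀ i, (whiskeredComplete c).Reachable (.inl ⟨0, hn⟩) (.inl i) := by
      intro i
      by_cases h : (⟨0, hn⟩ : Fin n) = i
      · rw [h]
      · exact SimpleGraph.Adj.reachable h
    rintro (i | p)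
    · exact hl i
    · exact (hl p.1).trans (SimpleGraph.Adj.reachable rfl)
  have : Nonempty (Fin n ⊕ Σ i : Fin n, Fin (c i)) := ⟨.inl ⟨0, hn⟩⟩
  exact ⟨fun u v => (key u).symm.trans (key v)⟩

/-- A whisker is adjacent only to its base vertex, so by maximality it can be left out only if
that base vertex is taken. -/
theorem whisker_mem_iff {n : ℕ} {c : Fin n → ℕ} {W : Finset (Fin n ⊕ Σ i : Fin n, Fin (c i))}
    (hW : (whiskeredComplete c).IsMaxIndepFinset W) (p : Σ i : Fin n, Fin (c i)) :
    Sum.inr p ∈ W ↔ Sum.inl p.1 ∉ W := by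
  refine ⟨fun hp hi => hW.1 _ hi _ hp rfl, fun hi => ?_⟩
  have hno : ∀ v ∈ W, ¬ (whiskeredComplete c).Adj (.inr p) v := by
    rintro (j | q) hv h
    · have h' : j = p.1 := h
      exact hi (h' ▸ hv)
    · exact h
  have hind : (whiskeredComplete c).IsIndepFinset (insert (.inr p) W) := by
    intro u hu v hv h
    rcases Finset.mem_insert.1 hu with rfl | hu
    · rcases Finset.mem_insert.1 hv with rfl | hv
      · exact h.ne rfl
      · exact hno v hv h
    · rcases Finset.mem_insert.1 hv with rfl | hv
      · exact hno u hu h.symm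
      · exact hW.1 u hu v hv h
  rw [← hW.2 _ hind (Finset.subset_insert _ _)]
  exact Finset.mem_insert_self _ _

theorem exists_connected_weighted_wellCovered' (n : ℕ) (hn : 1 ≤ n)
    (c : Fin n → ℕ) (hc : ∀ i, 1 ≤ c i) :
    ∃ G : SimpleGraph (Fin n ⊕ Σ i : Fin n, Fin (c i)), G.Connected ∧
      ∃ k : ℕ, ∀ W : Finset (Fin n ⊕ Σ i : Fin n, Fin (c i)),
        G.IsMaxIndepFinset W → ∑ v ∈ W, Sum.elim c (fun _ => 1) v = k := by
  refine ⟨whiskeredComplete c, whiskeredComplete_connected hn c, ∑ i, c i, fun W hW => ?_⟩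
  rw [← Fintype.sum_ite_mem, Fintype.sum_sum_type, Fintype.sum_sigma, ← Finset.sum_add_distrib]
  refine Finset.sum_congr rfl fun i _ => ?_
  simp only [whisker_mem_iff hW, Sum.elim_inl, Sum.elim_inr]
  by_cases h : Sum.inl i ∈ W <;> simp [h]
end

section
/- Let G be a finite simple graph whose complement Gᶜ is chordal, i.e., every cycle in Gᶜ of length at least 4 has a chord (an edge of Gᶜ joining two vertices of the cycle that are not consecutive on the cycle). Then G is levelable. -/
/-!
Put `H = Gᶜ`, a chordal graph; the maximal independent sets of `G` are the maximal cliques of `H`.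

By Dirac's theorem every nonempty induced subgraph `H[s]` has a vertex `v` whose neighbourhood `K`
in `s` is a clique (`exists_simplicial`). Removing `v` changes the family of maximal cliques very
little: those of `H[s]` are `K ∪ {v}` together with the maximal cliques of `H[s \ {v}]` other
than `K`. This allows an induction on `s`, provided that the claim is strengthened
(`exists_weight`): for every prescribed defect `d` on cliques and every lower bound `N` there are
weights `c ≥ N` such that `c(W) + d(W)` is the same number `k` for all maximal cliques `W`.

* If `K` is a maximal clique of `H[s \ {v}]`, put `c(v) = N` and use the inductive hypothesis with
  the defect of `K` changed to `d(K ∪ {v}) + N`.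
* Otherwise `K` is a proper subset of a maximal clique of `H[s \ {v}]`. The inductive hypothesis
  with lower bound `N + d(K ∪ {v})` makes `c(K)` smaller than `k` by at least that amount, so
  `c(v) = k - c(K) - d(K ∪ {v})` is at least `N`.

Taking `d = 0` and `N = 1` gives the theorem.
-/

open Finset

/-- A closed walk has a chord if some edge of the graph joins two vertices of the walk
without being an edge of the walk (for a cycle, this says the two vertices are not
consecutive on the cycle). -/
def SimpleGraph.Walk.HasChord {V : Type*} {G : SimpleGraph V} {v : V}
    (c : G.Walk v v) : Prop :=
  ∃ u w, u ∈ c.support ∧ w ∈ c.support ∧ G.Adj u w ∧ s(u, w) ∉ c.edges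

/-- A graph is chordal if every cycle of length at least `4` has a chord. -/
def SimpleGraph.IsChordal {V : Type*} (G : SimpleGraph V) : Prop :=
  ∀ (v : V) (c : G.Walk v v), c.IsCycle → 4 ≤ c.length → c.HasChord

namespace ChordalLevel

open SimpleGraph

variable {V : Type*} {H : SimpleGraph V}

/-- In a chordal graph, two distinct nonadjacent neighbours `a`, `b` of `x` are not joined by a walk
whose other vertices avoid the closed neighbourhood of `x`: a shortest such walk would close up
through `x` to a chordless cycle. -/
lemma no_walk (h : H.IsChordal) {x a b : V} (hxa : H.Adj x a) (hxb : H.Adj x b)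
    (hab : a ≠ b) (hnab : ¬ H.Adj a b) (n : ℕ) :
    ∀ p : H.Walk a b, p.length = n →
      (∀ v ∈ p.support, v = a ∨ v = b ∨ (v ≠ x ∧ ¬ H.Adj x v)) → False := by
  classical
  induction n using Nat.strong_induction_on with
  | _ n ih =>
  intro p₀ hp₀ hs₀
  obtain ⟨p, hpath, hlen, hs⟩ : ∃ p : H.Walk a b, p.IsPath ∧ p.length ≤ n ∧
      ∀ v ∈ p.support, v = a ∨ v = b ∨ (v ≠ x ∧ ¬ H.Adj x v) :=
    ⟨p₀.bypass, p₀.bypass_isPath, hp₀ ▸ p₀.length_bypass_le_length,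
      fun v hv => hs₀ v (p₀.support_bypass_subset_support hv)⟩
  -- A chord from position `i` to position `j` of `p` is a shortcut unless `j = i + 1`.
  have shortcut : ∀ i j, i < j → j ≤ p.length → H.Adj (p.getVert i) (p.getVert j) →
      s(p.getVert i, p.getVert j) ∈ p.edges := by
    intro i j hij hj hadj
    rcases Nat.lt_or_ge (i + 1) j with hlt | hge
    · exfalso
      refine ih _ ?_ ((p.take i).append (Walk.cons hadj (p.drop j))) rfl ?_
      · simp only [Walk.length_append, Walk.length_cons, Walk.take_length, Walk.drop_length]
        omega
      · intro v hv
        apply hs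
        rw [Walk.mem_support_append_iff, Walk.support_cons, List.mem_cons] at hv
        rcases hv with hv | rfl | hv
        · exact (p.isSubwalk_take i).support_subset hv
        · exact p.getVert_mem_support i
        · exact (p.isSubwalk_drop j).support_subset hv
    · obtain rfl : j = i + 1 := by omega
      rw [← Walk.mem_edges_toSubgraph, Subgraph.mem_edgeSet]
      exact p.toSubgraph_adj_getVert (by omega)
  have hx : x ∉ p.support := by
    intro hx
    rcases hs x hx with rfl | rfl | ⟨h1, -⟩
    · exact H.irrefl hxa
    · exact H.irrefl hxb
    · exact h1 rfl
  have hlen2 : 2 ≤ p.length := by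
    by_contra hc
    have : p.length = 0 ∨ p.length = 1 := by omega
    rcases this with h0 | h1
    · exact hab (Walk.eq_of_length_eq_zero h0)
    · exact hnab (Walk.adj_of_length_eq_one h1)
  have hcyc : (Walk.cons hxa (p.concat hxb.symm)).IsCycle := by
    rw [Walk.cons_isCycle_iff]
    refine ⟨hpath.concat hx _, ?_⟩
    rw [Walk.edges_concat, List.concat_eq_append, List.mem_append]
    rintro (he | he)
    · exact hx (p.fst_mem_support_of_mem_edges he)
    · simp at he
      grind
  obtain ⟨u, w, hu, hw, huw, hnot⟩ := h x _ hcyc (by simp; omega)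
  simp only [Walk.support_cons, Walk.support_concat, Walk.edges_cons, Walk.edges_concat,
    List.concat_eq_append, List.mem_cons, List.mem_append, List.not_mem_nil, or_false,
    not_or] at hu hw hnot
  obtain ⟨n1, n2, n3⟩ := hnot
  -- The only neighbours of `x` on the cycle are `a` and `b`.
  have key : ∀ w, w ∈ p.support → H.Adj x w → w = a ∨ w = b := by
    intro w hw hxw
    rcases hs w hw with h1 | h1 | ⟨-, h1⟩
    · exact .inl h1
    · exact .inr h1
    · exact absurd hxw h1
  have hu' : u = x ∨ u ∈ p.support := by tauto
  have hw' : w = x ∨ w ∈ p.support := by tauto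
  rcases hu' with rfl | hu'
  · rcases hw' with rfl | hw'
    · exact H.irrefl huw
    · rcases key w hw' huw with rfl | rfl
      · exact n1 rfl
      · exact n3 Sym2.eq_swap
  · rcases hw' with rfl | hw'
    · rcases key u hu' huw.symm with rfl | rfl
      · exact n1 Sym2.eq_swap
      · exact n3 rfl
    · obtain ⟨i, rfl, hi⟩ := Walk.mem_support_iff_exists_getVert.mp hu'
      obtain ⟨j, rfl, hj⟩ := Walk.mem_support_iff_exists_getVert.mp hw'
      rcases lt_trichotomy i j with hij | rfl | hij
      · exact n2 (shortcut i j hij hj huw)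
      · exact H.irrefl huw
      · exact n2 (Sym2.eq_swap ▸ shortcut j i hij hi huw.symm)

/-- `v` is simplicial in `H[s]`: it lies in `s` and its neighbours in `s` form a clique. -/
def Simplicial (H : SimpleGraph V) (s : Finset V) (v : V) : Prop :=
  v ∈ s ∧ ∀ a ∈ s, ∀ b ∈ s, H.Adj v a → H.Adj v b → a ≠ b → H.Adj a b

/-- Dirac's theorem in relative form: if `x` is not adjacent to all other vertices of `s`, then
`H[s]` has a simplicial vertex outside the closed neighbourhood of `x`. -/
lemma exists_simplicial_not_adj (h : H.IsChordal) (s : Finset V) :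
    ∀ x ∈ s, (∃ y ∈ s, y ≠ x ∧ ¬ H.Adj x y) →
      ∃ z, Simplicial H s z ∧ z ≠ x ∧ ¬ H.Adj x z := by
  classical
  induction s using Finset.strongInduction with
  | _ s ih =>
  rintro x hxs ⟨y, hys, hyx, hxy⟩
  -- `C` is the connected component of `y` in `s` minus the closed neighbourhood of `x`,
  -- and `S` is the set of vertices of `s` outside `C` with a neighbour in `C`.
  let P : V → Prop := fun v => v ∈ s ∧ v ≠ x ∧ ¬ H.Adj x v
  let C : Finset V := s.filter fun z => ∃ p : H.Walk y z, ∀ v ∈ p.support, P v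
  let S : Finset V := s.filter fun z => z ∉ C ∧ ∃ c ∈ C, H.Adj c z
  have hyC : y ∈ C := Finset.mem_filter.mpr ⟨hys, Walk.nil, by simp [P, hys, hyx, hxy]⟩
  have hCP : ∀ z ∈ C, P z := by
    intro z hz
    obtain ⟨-, p, hp⟩ := Finset.mem_filter.mp hz
    exact hp z p.end_mem_support
  have hstep : ∀ c ∈ C, ∀ z, P z → H.Adj c z → z ∈ C := by
    intro c hc z hz hcz
    obtain ⟨-, p, hp⟩ := Finset.mem_filter.mp hc
    refine Finset.mem_filter.mpr ⟨hz.1, p.concat hcz, ?_⟩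
    intro v hv
    simp only [Walk.support_concat, List.mem_append, List.mem_singleton]
      at hv
    rcases hv with hv | rfl
    · exact hp v hv
    · exact hz
  have hSx : ∀ a ∈ S, H.Adj x a := by
    intro a ha
    obtain ⟨has, haC, c, hc, hca⟩ := Finset.mem_filter.mp ha
    by_contra hxa
    refine haC (hstep c hc a ⟨has, ?_, hxa⟩ hca)
    rintro rfl
    exact (hCP c hc).2.2 hca.symm
  have hSclique : ∀ a ∈ S, ∀ b ∈ S, a ≠ b → H.Adj a b := by
    intro a ha b hb hab
    by_contra hnab
    obtain ⟨-, -, c, hc, hca⟩ := Finset.mem_filter.mp ha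
    obtain ⟨-, -, c', hc', hcb⟩ := Finset.mem_filter.mp hb
    obtain ⟨-, p, hp⟩ := Finset.mem_filter.mp hc
    obtain ⟨-, q, hq⟩ := Finset.mem_filter.mp hc'
    refine no_walk h (hSx a ha) (hSx b hb) hab hnab _
      (Walk.cons hca.symm ((p.reverse.append q).concat hcb)) rfl ?_
    intro v hv
    simp only [Walk.support_cons, Walk.support_concat, List.mem_cons,
      List.mem_append, List.not_mem_nil, or_false, Walk.mem_support_append_iff,
      Walk.support_reverse, List.mem_reverse] at hv
    rcases hv with hv | (hv | hv) | hv
    · exact .inl hv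
    · exact .inr (.inr (hp v hv).2)
    · exact .inr (.inr (hq v hv).2)
    · exact .inr (.inl hv)
  have hCt : ∀ c ∈ C, ∀ z ∈ s, H.Adj c z → z ∈ C ∪ S := by
    intro c hc z hz hcz
    by_cases hzC : z ∈ C
    · exact Finset.mem_union_left _ hzC
    · exact Finset.mem_union_right _ (Finset.mem_filter.mpr ⟨hz, hzC, c, hc, hcz⟩)
  have hts : C ∪ S ⊂ s := by
    refine Finset.ssubset_iff_subset_ne.mpr
      ⟨Finset.union_subset (Finset.filter_subset _ _) (Finset.filter_subset _ _), ?_⟩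
    intro he
    rcases Finset.mem_union.mp (he ▸ hxs : x ∈ C ∪ S) with hx | hx
    · exact (hCP x hx).2.1 rfl
    · exact H.irrefl (hSx x hx)
  -- Neighbours in `s` of a vertex of `C` lie in `C ∪ S`, so it suffices to work in `C ∪ S`.
  suffices hz : ∃ z ∈ C, Simplicial H (C ∪ S) z by
    obtain ⟨z, hzC, hz⟩ := hz
    refine ⟨z, ⟨(hCP z hzC).1, ?_⟩, (hCP z hzC).2⟩
    intro a ha b hb hza hzb hab
    exact hz.2 a (hCt z hzC a ha hza) b (hCt z hzC b hb hzb) hza hzb hab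
  by_cases hS : ∃ a ∈ S, ∃ z ∈ C ∪ S, z ≠ a ∧ ¬ H.Adj a z
  · obtain ⟨a, ha, hna⟩ := hS
    obtain ⟨z, hz, hza, hnz⟩ := ih _ hts a (Finset.mem_union_right _ ha) hna
    refine ⟨z, ?_, hz⟩
    rcases Finset.mem_union.mp hz.1 with hzC | hzS
    · exact hzC
    · exact absurd (hSclique a ha z hzS hza.symm) hnz
  · push Not at hS
    by_cases hC : ∃ a ∈ C, ∃ z ∈ C ∪ S, z ≠ a ∧ ¬ H.Adj a z
    · obtain ⟨a, ha, hna⟩ := hC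
      obtain ⟨z, hz, hza, hnz⟩ := ih _ hts a (Finset.mem_union_left _ ha) hna
      refine ⟨z, ?_, hz⟩
      rcases Finset.mem_union.mp hz.1 with hzC | hzS
      · exact hzC
      · exact absurd (hS z hzS a (Finset.mem_union_left _ ha) hza.symm).symm hnz
    · push Not at hC
      refine ⟨y, hyC, Finset.mem_union_left _ hyC, ?_⟩
      intro a ha b hb _ _ hab
      rcases Finset.mem_union.mp ha with ha | ha
      · exact hC a ha b hb hab.symm
      · exact hS a ha b hb hab.symm

lemma exists_simplicial (h : H.IsChordal) (s : Finset V) (hs : s.Nonempty) :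
    ∃ v, Simplicial H s v := by
  by_cases hx : ∃ x ∈ s, ∃ y ∈ s, y ≠ x ∧ ¬ H.Adj x y
  · obtain ⟨x, hxs, hy⟩ := hx
    obtain ⟨z, hz, -⟩ := exists_simplicial_not_adj h s x hxs hy
    exact ⟨z, hz⟩
  · push Not at hx
    obtain ⟨v, hv⟩ := hs
    exact ⟨v, hv, fun a ha b hb _ _ hab => hx a ha b hb hab.symm⟩

/-- `W` is a maximal clique of the induced subgraph `H[s]`. -/
def MaxCliqueIn (H : SimpleGraph V) (s W : Finset V) : Prop :=
  Maximal (fun U : Finset V => U ⊆ s ∧ H.IsClique (U : Set V)) W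

/-- Weights on the maximal cliques of an induced subgraph of a chordal graph can be prescribed up
to a common additive constant, with all vertex weights above any given bound. -/
lemma exists_weight (h : H.IsChordal) (s : Finset V) :
    ∀ (d : Finset V → ℕ) (N : ℕ), ∃ (c : V → ℕ) (k : ℕ), (∀ v, N ≤ c v) ∧
      ∀ W, MaxCliqueIn H s W → ∑ v ∈ W, c v + d W = k := by
  classical
  induction s using Finset.strongInduction with
  | _ s ih =>
  intro d N
  rcases s.eq_empty_or_nonempty with rfl | hne
  · refine ⟨fun _ => N, d ∅, fun _ => le_rfl, fun W hW => ?_⟩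
    obtain rfl : W = ∅ := Finset.subset_empty.mp hW.prop.1
    simp
  obtain ⟨v, hvs, hv⟩ := exists_simplicial h s hne
  set K : Finset V := s.filter fun z => H.Adj v z with hK
  have hvK : v ∉ K := by simp [hK]
  have hKs : K ⊆ s.erase v := by
    intro z hz
    obtain ⟨hz1, hz2⟩ := Finset.mem_filter.mp hz
    exact Finset.mem_erase.mpr ⟨hz2.ne', hz1⟩
  have hKc : H.IsClique (K : Set V) := by
    intro a ha b hb hab
    obtain ⟨ha1, ha2⟩ := Finset.mem_filter.mp (Finset.mem_coe.mp ha)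
    obtain ⟨hb1, hb2⟩ := Finset.mem_filter.mp (Finset.mem_coe.mp hb)
    exact hv a ha1 b hb1 ha2 hb2 hab
  have hKv : insert v K ⊆ s ∧ H.IsClique ((insert v K : Finset V) : Set V) := by
    refine ⟨Finset.insert_subset hvs (Finset.filter_subset _ _), ?_⟩
    rw [Finset.coe_insert, isClique_insert]
    exact ⟨hKc, fun b hb _ => (Finset.mem_filter.mp (Finset.mem_coe.mp hb)).2⟩
  have hcases : ∀ W, MaxCliqueIn H s W →
      W = insert v K ∨ (v ∉ W ∧ W ≠ K ∧ MaxCliqueIn H (s.erase v) W) := by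
    intro W hW
    by_cases hvW : v ∈ W
    · left
      refine Maximal.eq_of_le hW hKv fun z hz => ?_
      by_cases hzv : z = v
      · simp [hzv]
      · exact Finset.mem_insert_of_mem (Finset.mem_filter.mpr
          ⟨hW.prop.1 hz, hW.prop.2 hvW hz (Ne.symm hzv)⟩)
    · right
      refine ⟨hvW, ?_, ⟨Finset.subset_erase.mpr ⟨hW.prop.1, hvW⟩, hW.prop.2⟩, ?_⟩
      · rintro rfl
        exact hvW (hW.le_of_ge hKv (Finset.subset_insert _ _) (Finset.mem_insert_self _ _))
      · intro U hU hWU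
        exact hW.le_of_ge ⟨hU.1.trans (Finset.erase_subset _ _), hU.2⟩ hWU
  -- Assigning `v` a weight `m` changes only the weight of `K ∪ {v}`.
  have hsum : ∀ (c : V → ℕ) (m : ℕ) (W : Finset V), v ∉ W →
      ∑ u ∈ W, Function.update c v m u = ∑ u ∈ W, c u := by
    intro c m W hvW
    refine Finset.sum_congr rfl fun u hu => Function.update_of_ne ?_ _ _
    rintro rfl
    exact hvW hu
  have hext : ∀ (c : V → ℕ) (m k : ℕ), (∀ u, N ≤ c u) → N ≤ m →
      (∀ W, W ≠ K → MaxCliqueIn H (s.erase v) W → ∑ u ∈ W, c u + d W = k) →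
      m + ∑ u ∈ K, c u + d (insert v K) = k →
      ∃ (c : V → ℕ) (k : ℕ), (∀ v, N ≤ c v) ∧
        ∀ W, MaxCliqueIn H s W → ∑ v ∈ W, c v + d W = k := by
    intro c m k hc hm hW hk
    refine ⟨Function.update c v m, k, fun u => ?_, fun W hWmax => ?_⟩
    · by_cases huv : u = v
      · subst huv
        simpa using hm
      · simpa [huv] using hc u
    · rcases hcases W hWmax with rfl | ⟨h1, h2, h3⟩
      · rw [Finset.sum_insert hvK, hsum c m K hvK, Function.update_self, hk]
      · rw [hsum c m W h1, hW W h2 h3]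
  by_cases hmax : MaxCliqueIn H (s.erase v) K
  · obtain ⟨c, k, hc, hk⟩ := ih _ (Finset.erase_ssubset hvs)
      (Function.update d K (d (insert v K) + N)) N
    refine hext c N k hc le_rfl (fun W hWK hW => ?_) ?_
    · simpa [hWK] using hk W hW
    · have := hk K hmax
      rw [Function.update_self] at this
      omega
  · obtain ⟨c, k, hc, hk⟩ := ih _ (Finset.erase_ssubset hvs) d (N + d (insert v K))
    obtain ⟨W, hKW, hW⟩ : ∃ W, K ⊆ W ∧ MaxCliqueIn H (s.erase v) W := by
      have hfin : {U : Finset V | U ⊆ s.erase v ∧ H.IsClique (U : Set V)}.Finite :=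
        (s.erase v).powerset.finite_toSet.subset fun U hU => by
          exact Finset.mem_coe.mpr (Finset.mem_powerset.mpr hU.1)
      exact hfin.exists_le_maximal ⟨hKs, hKc⟩
    obtain ⟨w, hwW, hwK⟩ : ∃ w ∈ W, w ∉ K := by
      by_contra hcon
      push Not at hcon
      exact hmax (Finset.Subset.antisymm hKW hcon ▸ hW)
    have hle : c w + ∑ u ∈ K, c u ≤ ∑ u ∈ W, c u := by
      rw [← Finset.sum_insert hwK]
      exact Finset.sum_le_sum_of_subset (Finset.insert_subset hwW hKW)
    have h1 := hk W hW
    have h2 := hc w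
    exact hext c (k - ∑ u ∈ K, c u - d (insert v K)) k
      (fun u => (Nat.le_add_right _ _).trans (hc u)) (by omega) (fun U _ hU => hk U hU) (by omega)

end ChordalLevel

theorem levelable_of_compl_chordal {V : Type*} [Fintype V] (G : SimpleGraph V)
    (h : Gᶜ.IsChordal) : G.Levelable := by
  have hindep : ∀ W : Finset V, Gᶜ.IsClique (W : Set V) ↔ G.IsIndepFinset W := by
    intro W
    constructor
    · intro hW u hu w hw huw
      exact ((SimpleGraph.compl_adj _ _ _).mp (hW hu hw huw.ne)).2 huw
    · intro hW u hu w hw huw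
      exact (SimpleGraph.compl_adj _ _ _).mpr ⟨huw, hW u hu w hw⟩
  obtain ⟨c, k, hc, hk⟩ := ChordalLevel.exists_weight h Finset.univ (fun _ => 0) 1
  refine ⟨c, k, hc, fun W hW => ?_⟩
  refine hk W ⟨⟨Finset.subset_univ _, (hindep W).mpr hW.1⟩, fun U hU hWU => ?_⟩
  exact (hW.2 U ((hindep U).mp hU.2) hWU).le
end

section
/- Let G be a finite tree (a connected acyclic simple graph) with at least 2 vertices. A free vertex of G is a vertex belonging to exactly one edge, i.e., a vertex of degree 1. Then G is levelable if and only if every non-free vertex of G (every vertex of degree at least 2) is adjacent to at least one free vertex. -/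
/-!
Suppose `G` is levelable with weight `c` and some `v` of degree at least two has no free neighbour.
Then every neighbour `u` of `v` has a neighbour `w u ≠ v`, and the vertices `w u` form an
independent set; a maximal independent set `Q` containing all of them contains `v`.
Let `P` be a maximal independent set containing two distinct neighbours `u₁`, `u₂` of `v`, and let
`T` be the component of `u₁` after deleting the edge `v u₁`. Swapping the parts of `P` and of
`Q \ {v}` lying in `T` gives two further maximal independent sets (`isMaxIndepFinset_swap`), whose
total weights add up to those of `P` and `Q \ {v}`. Hence `2k = 2k - c v`, contradicting `1 ≤ c v`.

Conversely, if every non-free vertex has a free neighbour, give free vertices weight `1` and every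
other vertex the number of its free neighbours. Unless `G` is a single edge, no two free vertices
are adjacent, and a maximal independent set omits a free vertex exactly when it contains its unique
neighbour, so its total weight is the number of free vertices.
-/

open Finset

namespace SimpleGraph

variable {V : Type*} {G : SimpleGraph V}

/-! ### Maximal independent sets -/

theorem isMaxIndepFinset_iff_s14 [DecidableEq V] {W : Finset V} :
    G.IsMaxIndepFinset W ↔ G.IsIndepFinset W ∧ ∀ x ∉ W, ∃ y ∈ W, G.Adj x y := by
  constructor
  · rintro ⟨hW, hmax⟩
    refine ⟨hW, fun x hx => ?_⟩
    by_contra! hcon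
    refine hx (hmax (insert x W) ?_ (Finset.subset_insert x W) ▸ Finset.mem_insert_self x W)
    intro a ha b hb
    rw [Finset.mem_insert] at ha hb
    rcases ha with rfl | ha <;> rcases hb with rfl | hb
    · exact G.irrefl
    · exact hcon b hb
    · exact fun h => hcon a ha h.symm
    · exact hW a ha b hb
  · rintro ⟨hW, hdom⟩
    refine ⟨hW, fun U hU hWU => Finset.Subset.antisymm (fun x hx => ?_) hWU⟩
    by_contra hxW
    obtain ⟨y, hy, hxy⟩ := hdom x hxW
    exact hU x hx y (hWU hy) hxy

theorem IsIndepFinset.exists_isMaxIndepFinset [Fintype V] {S : Finset V}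
    (hS : G.IsIndepFinset S) : ∃ W, S ⊆ W ∧ G.IsMaxIndepFinset W := by
  obtain ⟨W, hSW, hW⟩ :=
    (Set.toFinite {W : Finset V | G.IsIndepFinset W}).exists_le_maximal hS
  exact ⟨W, hSW, hW.prop, fun U hU hWU => (hW.eq_of_le hU hWU).symm⟩

/-! ### Branches of a tree at a vertex -/

/-- A branch of a tree at `v`: the vertices on the far side of the edge `v u`. The only edges
leaving it end at `v`. -/
theorem IsAcyclic.exists_branch (hG : G.IsAcyclic) {v u : V} (huv : G.Adj v u) :
    ∃ T : Set V, u ∈ T ∧ (∀ u', G.Adj v u' → u' ≠ u → u' ∉ T) ∧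
      ∀ x y, G.Adj x y → x ∈ T → y ∉ T → x = v ∨ y = v := by
  have hb := isAcyclic_iff_forall_adj_isBridge.1 hG huv
  rw [isBridge_iff] at hb
  refine ⟨{x | (G.deleteEdges {s(v, u)}).Reachable u x}, Reachable.refl u, ?_, ?_⟩
  · intro u' hu' hne hr
    refine hb (Reachable.symm (Reachable.trans hr (Adj.reachable ?_)))
    rw [deleteEdges_adj]
    refine ⟨hu'.symm, ?_⟩
    have := hu'.ne
    simp only [Set.mem_singleton_iff, Sym2.eq_iff]
    grind
  · intro x y hxy hx hy
    by_contra! hne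
    refine hy (Reachable.trans hx (Adj.reachable ?_))
    rw [deleteEdges_adj]
    refine ⟨hxy, ?_⟩
    simp only [Set.mem_singleton_iff, Sym2.eq_iff]
    grind

/-- Gluing `P` on one side of the cut vertex `v` to `Q \ {v}` on the other. Domination of `v` comes
from `u`; a neighbour of `v` on the side of `Q` is dominated by some vertex of `Q` other than `v`,
by `hw`. -/
theorem isMaxIndepFinset_swap [DecidableEq V] {P Q : Finset V} {T : Set V} [DecidablePred (· ∈ T)]
    {v u : V} (hP : G.IsMaxIndepFinset P) (hQ : G.IsMaxIndepFinset Q)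
    (hT : ∀ x y, G.Adj x y → x ∈ T → y ∉ T → x = v ∨ y = v)
    (huv : G.Adj v u) (huP : u ∈ P) (huT : u ∈ T)
    (hw : ∀ x, G.Adj v x → ∃ y ∈ Q, y ≠ v ∧ G.Adj x y) :
    G.IsMaxIndepFinset (P.filter (· ∈ T) ∪ (Q.erase v).filter (· ∉ T)) := by
  rw [isMaxIndepFinset_iff_s14] at hP hQ ⊢
  obtain ⟨hPi, hPd⟩ := hP
  obtain ⟨hQi, hQd⟩ := hQ
  have hvP : v ∉ P := fun h => hPi v h u huP huv
  have hQd' : ∀ x, x ≠ v → x ∉ Q → ∃ y ∈ Q, y ≠ v ∧ G.Adj x y := by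
    intro x hxv hx
    obtain ⟨y, hy, hxy⟩ := hQd x hx
    by_cases hyv : y = v
    · exact hw x (hyv ▸ hxy.symm)
    · exact ⟨y, hy, hyv, hxy⟩
  simp only [IsIndepFinset, Finset.mem_union, Finset.mem_filter, Finset.mem_erase]
  constructor
  · rintro a (⟨ha, haT⟩ | ⟨⟨hav, ha⟩, haT⟩) b (⟨hb, hbT⟩ | ⟨⟨hbv, hb⟩, hbT⟩) hab
    · exact hPi a ha b hb hab
    · rcases hT a b hab haT hbT with rfl | rfl
      · exact hvP ha
      · exact hbv rfl
    · rcases hT b a hab.symm hbT haT with rfl | rfl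
      · exact hvP hb
      · exact hav rfl
    · exact hQi a ha b hb hab
  · intro x hx
    by_cases hxv : x = v
    · exact ⟨u, Or.inl ⟨huP, huT⟩, hxv ▸ huv⟩
    by_cases hxT : x ∈ T
    · obtain ⟨y, hy, hxy⟩ := hPd x (fun h => hx (Or.inl ⟨h, hxT⟩))
      refine ⟨y, Or.inl ⟨hy, ?_⟩, hxy⟩
      by_contra hyT
      rcases hT x y hxy hxT hyT with rfl | rfl
      · exact hxv rfl
      · exact hvP hy
    · obtain ⟨y, hy, hyv, hxy⟩ := hQd' x hxv (fun h => hx (Or.inr ⟨⟨hxv, h⟩, hxT⟩))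
      refine ⟨y, Or.inr ⟨⟨hyv, hy⟩, fun hyT => ?_⟩, hxy⟩
      rcases hT y x hxy.symm hyT hxT with h | h
      · exact hyv h
      · exact hxv h

/-! ### Levelable trees have free neighbours -/

theorem IsAcyclic.exists_free_of_levelable [Fintype V] [DecidableEq V] [DecidableRel G.Adj]
    (hG : G.IsAcyclic) (hL : G.Levelable) (v : V) (hv : 2 ≤ G.degree v) :
    ∃ u, G.Adj v u ∧ G.degree u = 1 := by
  classical
  by_contra! hcon
  obtain ⟨c, k, hc, hk⟩ := hL
  have hw : ∀ u, ∃ w, G.Adj v u → w ≠ v ∧ G.Adj u w := by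
    intro u
    by_cases hu : G.Adj v u
    · have h1 : 1 < (G.neighborFinset u).card := by
        have h0 : 0 < G.degree u := (G.degree_pos_iff_exists_adj u).2 ⟨v, hu.symm⟩
        have := hcon u hu
        rw [card_neighborFinset_eq_degree]
        omega
      obtain ⟨w, hw, hwv⟩ := Finset.exists_mem_ne h1 v
      exact ⟨w, fun _ => ⟨hwv, by simpa using hw⟩⟩
    · exact ⟨v, fun h => absurd h hu⟩
  choose w hw using hw
  obtain ⟨u₁, hu₁, u₂, hu₂, hne⟩ := Finset.one_lt_card.1
    (show 1 < (G.neighborFinset v).card by rw [card_neighborFinset_eq_degree]; omega)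
  rw [mem_neighborFinset] at hu₁ hu₂
  obtain ⟨T, huT, hT', hT⟩ := hG.exists_branch hu₁
  have hu₂T := hT' u₂ hu₂ hne.symm
  have hPi : G.IsIndepFinset {u₁, u₂} := by
    have h12 : ¬ G.Adj u₁ u₂ := fun h => by
      rcases hT _ _ h huT hu₂T with rfl | rfl
      · exact G.irrefl hu₁
      · exact G.irrefl hu₂
    intro a ha b hb
    simp only [Finset.mem_insert, Finset.mem_singleton] at ha hb
    rcases ha with rfl | rfl <;> rcases hb with rfl | rfl
    · exact G.irrefl
    · exact h12
    · exact fun h => h12 h.symm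
    · exact G.irrefl
  have hQi : G.IsIndepFinset ((G.neighborFinset v).image w) := by
    intro a ha b hb hab
    simp only [Finset.mem_image, mem_neighborFinset] at ha hb
    obtain ⟨p, hp, rfl⟩ := ha
    obtain ⟨q, hq, rfl⟩ := hb
    by_cases hpq : q = p
    · subst hpq
      exact G.irrefl hab
    -- `w p` lies in the branch through `p`, while `q` and hence `w q` lie outside it
    obtain ⟨S, hpS, hS', hS⟩ := hG.exists_branch hp
    have hqS := hS' q hq hpq
    have hwp := hw p hp
    have hwq := hw q hq
    have h1 : w p ∈ S := by
      by_contra h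
      rcases hS _ _ hwp.2 hpS h with h | h
      · exact hp.ne h.symm
      · exact hwp.1 h
    have h2 : w q ∉ S := fun h => by
      rcases hS _ _ hwq.2.symm h hqS with h | h
      · exact hwq.1 h
      · exact hq.ne h.symm
    rcases hS _ _ hab h1 h2 with h | h
    · exact hwp.1 h
    · exact hwq.1 h
  obtain ⟨P, hPsub, hP⟩ := hPi.exists_isMaxIndepFinset
  obtain ⟨Q, hQsub, hQ⟩ := hQi.exists_isMaxIndepFinset
  have hu₁P : u₁ ∈ P := hPsub (by simp)
  have hu₂P : u₂ ∈ P := hPsub (by simp)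
  have hwQ : ∀ x, G.Adj v x → w x ∈ Q := fun x hx =>
    hQsub (Finset.mem_image_of_mem w (by simpa using hx))
  have hQw : ∀ x, G.Adj v x → ∃ y ∈ Q, y ≠ v ∧ G.Adj x y := fun x hx =>
    ⟨w x, hwQ x hx, hw x hx⟩
  have hvQ : v ∈ Q := by
    by_contra h
    obtain ⟨y, hy, hvy⟩ := (isMaxIndepFinset_iff_s14.1 hQ).2 v h
    exact hQ.1 y hy (w y) (hwQ y hvy) (hw y hvy).2
  have e₁ := hk _ (isMaxIndepFinset_swap hP hQ hT hu₁ hu₁P huT hQw)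
  have e₂ := hk _ (isMaxIndepFinset_swap (T := Tᶜ) hP hQ
    (fun x y hxy hx hy => (hT y x hxy.symm (not_not.1 hy) hx).symm) hu₂ hu₂P hu₂T hQw)
  rw [Finset.sum_union (by
    rw [Finset.disjoint_left]; intro a; simp only [Finset.mem_filter]; tauto)] at e₁ e₂
  simp only [Set.mem_compl_iff, not_not] at e₂
  have eP := hk P hP
  have eQ := hk Q hQ
  rw [← Finset.sum_filter_add_sum_filter_not P (· ∈ T)] at eP
  rw [← Finset.sum_erase_add Q c hvQ,
    ← Finset.sum_filter_add_sum_filter_not (Q.erase v) (· ∈ T)] at eQ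
  have := hc v
  omega

/-! ### Construction of a levelling weight -/

theorem eq_of_degree_eq_one [Fintype V] [DecidableRel G.Adj] {x a b : V}
    (hx : G.degree x = 1) (ha : G.Adj x a) (hb : G.Adj x b) : a = b := by
  rw [← card_neighborFinset_eq_degree] at hx
  exact Finset.card_le_one.1 hx.le a (by simpa using ha) b (by simpa using hb)

/-- A connected graph in which two free vertices are adjacent is a single edge, so constant weight `1`
works. -/
theorem Connected.levelable_of_adj_free [Fintype V] [DecidableEq V] [DecidableRel G.Adj]
    (hG : G.Connected) {a b : V} (hab : G.Adj a b) (ha : G.degree a = 1) (hb : G.degree b = 1) :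
    G.Levelable := by
  have hall : ∀ x, x = a ∨ x = b := by
    have key : ∀ y x, G.Walk y x → (y = a ∨ y = b) → (x = a ∨ x = b) := by
      intro y x p
      induction p with
      | nil => exact id
      | cons h _ ih =>
        rintro (rfl | rfl)
        · exact ih (Or.inr (eq_of_degree_eq_one ha h hab))
        · exact ih (Or.inl (eq_of_degree_eq_one hb h hab.symm))
    intro x
    obtain ⟨p⟩ := hG.preconnected a x
    exact key a x p (Or.inl rfl)
  refine ⟨fun _ => 1, 1, fun _ => le_rfl, fun W hW => ?_⟩
  rw [isMaxIndepFinset_iff_s14] at hW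
  obtain ⟨hWi, hWd⟩ := hW
  rw [← Finset.card_eq_sum_ones, Finset.card_eq_one]
  by_cases haW : a ∈ W
  · refine ⟨a, Finset.eq_singleton_iff_unique_mem.2 ⟨haW, fun x hx => ?_⟩⟩
    rcases hall x with rfl | rfl
    · rfl
    · exact absurd hab (hWi _ haW _ hx)
  · obtain ⟨y, hy, hay⟩ := hWd a haW
    obtain rfl := eq_of_degree_eq_one ha hay hab
    refine ⟨y, Finset.eq_singleton_iff_unique_mem.2 ⟨hy, fun x hx => ?_⟩⟩
    rcases hall x with rfl | rfl
    · exact absurd hx haW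
    · rfl

theorem levelable_of_forall_exists_free [Fintype V] [DecidableEq V] [DecidableRel G.Adj]
    (hpos : ∀ v, 0 < G.degree v)
    (hfree : ∀ a b, G.Adj a b → G.degree a = 1 → G.degree b ≠ 1)
    (h : ∀ v : V, 2 ≤ G.degree v → ∃ u, G.Adj v u ∧ G.degree u = 1) : G.Levelable := by
  set L : Finset V := Finset.univ.filter (fun x => G.degree x = 1) with hL
  set N : V → Finset V := fun v => L.filter (fun x => G.Adj v x) with hN
  have hmemN : ∀ v x, x ∈ N v ↔ G.degree x = 1 ∧ G.Adj v x := by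
    intro v x
    simp [hN, hL]
  refine ⟨fun v => if G.degree v = 1 then 1 else (N v).card, L.card, fun v => ?_, fun W hW => ?_⟩
  · dsimp only
    split_ifs with hv
    · exact le_rfl
    · obtain ⟨u, hu, hu1⟩ := h v (by have := hpos v; omega)
      exact Finset.card_pos.2 ⟨u, (hmemN v u).2 ⟨hu1, hu⟩⟩
  · rw [isMaxIndepFinset_iff_s14] at hW
    obtain ⟨hWi, hWd⟩ := hW
    rw [Finset.sum_ite, ← Finset.card_eq_sum_ones, ← Finset.card_biUnion, add_comm,
      ← Finset.card_union_of_disjoint]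
    · congr 1
      ext x
      simp only [Finset.mem_union, Finset.mem_biUnion, Finset.mem_filter, hmemN]
      simp only [hL, Finset.mem_filter, Finset.mem_univ, true_and]
      constructor
      · rintro (⟨_, _, hx, _⟩ | ⟨_, hx⟩) <;> exact hx
      · intro hx
        by_cases hxW : x ∈ W
        · exact Or.inr ⟨hxW, hx⟩
        · obtain ⟨y, hy, hxy⟩ := hWd x hxW
          exact Or.inl ⟨y, ⟨hy, hfree x y hxy hx⟩, hx, hxy.symm⟩
    · rw [Finset.disjoint_left]
      simp only [Finset.mem_biUnion, Finset.mem_filter, hmemN]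
      rintro x ⟨y, ⟨hy, _⟩, _, hyx⟩ ⟨hx, _⟩
      exact hWi y hy x hx hyx
    · intro y _ z _ hyz
      rw [Function.onFun, Finset.disjoint_left]
      intro x hxy hxz
      rw [hmemN] at hxy hxz
      exact hyz (eq_of_degree_eq_one hxy.1 hxy.2.symm hxz.2.symm)

end SimpleGraph

theorem tree_levelable_iff {V : Type*} [Fintype V] [DecidableEq V]
    (G : SimpleGraph V) [DecidableRel G.Adj] (hT : G.IsTree) (hV : 2 ≤ Fintype.card V) :
    G.Levelable ↔ ∀ v : V, 2 ≤ G.degree v → ∃ u, G.Adj v u ∧ G.degree u = 1 := by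
  refine ⟨hT.isAcyclic.exists_free_of_levelable, fun h => ?_⟩
  by_cases hadj : ∃ a b, G.Adj a b ∧ G.degree a = 1 ∧ G.degree b = 1
  · obtain ⟨a, b, hab, ha, hb⟩ := hadj
    exact hT.connected.levelable_of_adj_free hab ha hb
  · have : Nontrivial V := Fintype.one_lt_card_iff_nontrivial.1 hV
    exact SimpleGraph.levelable_of_forall_exists_free
      (fun v => hT.connected.preconnected.degree_pos_of_nontrivial v)
      (fun a b hab ha hb => hadj ⟨a, b, hab, ha, hb⟩) h
end

section
/- For every n ≥ 3, the cycle graph C_n on n vertices is levelable if and only if n ∈ {3, 4, 5, 7}. -/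
/-!
Going around the cycle, the maximal independent sets of `C_n` are the vertex sets all of whose
consecutive gaps are `2` or `3`. For `n = 3, 4, 5, 7` the number of gaps is determined by `n`, so
all maximal independent sets have the same size and the constant weight `1` works.

If `n = 6` or `n ≥ 8`, the set `evenSet` of even numbers at most `n - 2` and the set `swapSet`
obtained from it by replacing `2, 4` with `3` are both maximal independent. Comparing their
weights, also after a rotation by `i`, gives `c (i + 3) = c (i + 2) + c (i + 4)` for every `i`.
Summing over `i` shows that the total weight `S` satisfies `S = 2 S`, so `S = 0`, which is
impossible for positive weights.
-/


open Finset

namespace CycleLevel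

/-- An independent set is maximal if every outside vertex has a neighbour in it. -/
lemma isMaxIndepFinset_of_dominating {V : Type*} {G : SimpleGraph V} {W : Finset V}
    (h : G.IsIndepFinset W) (hd : ∀ v, v ∉ W → ∃ w ∈ W, G.Adj v w) : G.IsMaxIndepFinset W := by
  refine ⟨h, fun U hU hWU => Finset.Subset.antisymm (fun v hv => ?_) hWU⟩
  by_contra hvW
  obtain ⟨w, hw, hvw⟩ := hd v hvW
  exact hU v hv w (hWU hw) hvw

lemma dominating_of_isMaxIndepFinset {V : Type*} [DecidableEq V] {G : SimpleGraph V}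
    {W : Finset V} (h : G.IsMaxIndepFinset W) (v : V) (hv : v ∉ W) : ∃ w ∈ W, G.Adj v w := by
  by_contra! hn
  refine hv (h.2 (insert v W) ?_ (Finset.subset_insert v W) ▸ Finset.mem_insert_self v W)
  intro a ha b hb hab
  rcases Finset.mem_insert.1 ha with rfl | ha' <;> rcases Finset.mem_insert.1 hb with rfl | hb'
  · exact G.loopless.irrefl _ hab
  · exact hn b hb' hab
  · exact hn a ha' hab.symm
  · exact h.1 a ha' b hb' hab

/-- Finite cases: the constant weight `1` works when all independent dominating sets have the
same size. -/
lemma levelable_of_card {V : Type*} [DecidableEq V] {G : SimpleGraph V} (k : ℕ)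
    (h : ∀ W : Finset V, (∀ u ∈ W, ∀ v ∈ W, ¬ G.Adj u v) →
      (∀ v, v ∉ W → ∃ w ∈ W, G.Adj v w) → W.card = k) : G.Levelable :=
  ⟨fun _ => 1, k, fun _ => le_rfl, fun W hW => by
    simpa using h W hW.1 (dominating_of_isMaxIndepFinset hW)⟩

lemma adj_iff {m : ℕ} (u v : Fin (m + 6)) : (SimpleGraph.cycleGraph (m + 6)).Adj u v ↔
    u.val + 1 = v.val ∨ v.val + 1 = u.val ∨ (u.val = 0 ∧ v.val = m + 5) ∨
      (v.val = 0 ∧ u.val = m + 5) := by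
  have key : ∀ a b : Fin (m + 6), (a - b).val = 1 ↔
      b.val + 1 = a.val ∨ (a.val = 0 ∧ b.val = m + 5) := by
    intro a b
    have ha := a.isLt
    have hb := b.isLt
    rcases le_or_gt b a with h | h
    · rw [Fin.sub_val_of_le h]
      have : b.val ≤ a.val := h
      omega
    · rw [Fin.coe_sub_iff_lt.2 h]
      have : a.val < b.val := h
      omega
  rw [SimpleGraph.cycleGraph_adj', key, key]
  tauto

/-- Rotations of the cycle preserve maximal independent sets given by domination. -/
lemma isMaxIndepFinset_rotate {m : ℕ} {W : Finset (Fin (m + 6))}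
    (h : (SimpleGraph.cycleGraph (m + 6)).IsIndepFinset W)
    (hd : ∀ v, v ∉ W → ∃ w ∈ W, (SimpleGraph.cycleGraph (m + 6)).Adj v w) (i : Fin (m + 6)) :
    (SimpleGraph.cycleGraph (m + 6)).IsMaxIndepFinset
      (W.map (Equiv.addRight i).toEmbedding) := by
  have hadj : ∀ u v : Fin (m + 6), (SimpleGraph.cycleGraph (m + 6)).Adj (u + i) (v + i) ↔
      (SimpleGraph.cycleGraph (m + 6)).Adj u v := by
    intro u v
    simp only [SimpleGraph.cycleGraph_adj', add_sub_add_right_eq_sub]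
  apply isMaxIndepFinset_of_dominating
  · intro u hu v hv
    obtain ⟨x, hx, rfl⟩ := Finset.mem_map.1 hu
    obtain ⟨y, hy, rfl⟩ := Finset.mem_map.1 hv
    exact fun hh => h x hx y hy ((hadj x y).1 hh)
  · intro v hv
    have hv' : v - i ∉ W := fun hh => hv (Finset.mem_map.2 ⟨v - i, hh, by simp⟩)
    obtain ⟨w, hw, hvw⟩ := hd _ hv'
    refine ⟨w + i, Finset.mem_map.2 ⟨w, hw, rfl⟩, ?_⟩
    have := (hadj (v - i) w).2 hvw
    rwa [sub_add_cancel] at this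

/-- The even vertices at most `n - 2` other than `2` and `4`, where `n = m + 6`. -/
def core (m : ℕ) : Finset (Fin (m + 6)) :=
  Finset.univ.filter fun v => v.val % 2 = 0 ∧ v.val ≤ m + 4 ∧ v.val ≠ 2 ∧ v.val ≠ 4

/-- The even vertices at most `n - 2`, where `n = m + 6`: all gaps are `2`, except for a final
gap `3` if `n` is odd. -/
def evenSet (m : ℕ) : Finset (Fin (m + 6)) :=
  insert ⟨2, by omega⟩ (insert ⟨4, by omega⟩ (core m))

/-- The set `evenSet m` with `2, 4` replaced by `3`: the three gaps `2` from `0` to `6` become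
two gaps `3`. -/
def swapSet (m : ℕ) : Finset (Fin (m + 6)) :=
  insert ⟨3, by omega⟩ (core m)

lemma mem_evenSet {m : ℕ} (v : Fin (m + 6)) :
    v ∈ evenSet m ↔ v.val % 2 = 0 ∧ v.val ≤ m + 4 := by
  simp only [evenSet, core, Finset.mem_insert, Finset.mem_filter, Finset.mem_univ, true_and,
    Fin.ext_iff]
  omega

lemma mem_swapSet {m : ℕ} (v : Fin (m + 6)) : v ∈ swapSet m ↔
    v.val = 3 ∨ (v.val % 2 = 0 ∧ v.val ≤ m + 4 ∧ v.val ≠ 2 ∧ v.val ≠ 4) := by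
  simp only [swapSet, core, Finset.mem_insert, Finset.mem_filter, Finset.mem_univ, true_and,
    Fin.ext_iff]

lemma evenSet_rotate (m : ℕ) (i : Fin (m + 6)) :
    (SimpleGraph.cycleGraph (m + 6)).IsMaxIndepFinset
      ((evenSet m).map (Equiv.addRight i).toEmbedding) := by
  apply isMaxIndepFinset_rotate
  · intro u hu v hv
    rw [mem_evenSet] at hu hv
    rw [adj_iff]
    omega
  · intro v hv
    rw [mem_evenSet] at hv
    have hlt := v.isLt
    obtain ⟨a, ha, hmem, hva⟩ : ∃ a, a < m + 6 ∧
        (a % 2 = 0 ∧ a ≤ m + 4) ∧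
        (v.val + 1 = a ∨ a + 1 = v.val ∨
        (v.val = 0 ∧ a = m + 5) ∨ (a = 0 ∧ v.val = m + 5)) := by
      by_cases h5 : v.val = m + 5
      · exact ⟨0, by omega⟩
      · exact ⟨v.val - 1, by omega⟩
    exact ⟨⟨a, ha⟩, (mem_evenSet _).2 hmem, (adj_iff _ _).2 hva⟩

/-- The case `m = 1`, where `n = 7`, fails: the set `{0, 3}` leaves a gap `4`. -/
lemma swapSet_rotate {m : ℕ} (hm : m ≠ 1) (i : Fin (m + 6)) :
    (SimpleGraph.cycleGraph (m + 6)).IsMaxIndepFinset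
      ((swapSet m).map (Equiv.addRight i).toEmbedding) := by
  apply isMaxIndepFinset_rotate
  · intro u hu v hv
    rw [mem_swapSet] at hu hv
    rw [adj_iff]
    omega
  · intro v hv
    rw [mem_swapSet] at hv
    have hlt := v.isLt
    obtain ⟨a, ha, hmem, hva⟩ : ∃ a, a < m + 6 ∧
        (a = 3 ∨ (a % 2 = 0 ∧ a ≤ m + 4 ∧ a ≠ 2 ∧ a ≠ 4)) ∧
        (v.val + 1 = a ∨ a + 1 = v.val ∨
        (v.val = 0 ∧ a = m + 5) ∨ (a = 0 ∧ v.val = m + 5)) := by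
      by_cases h5 : v.val = m + 5 ∨ v.val = 1
      · exact ⟨0, by omega⟩
      by_cases h2 : v.val = 2 ∨ v.val = 4
      · exact ⟨3, by omega⟩
      by_cases h6 : v.val = 5
      · exact ⟨6, by omega⟩
      · exact ⟨v.val - 1, by omega⟩
    exact ⟨⟨a, ha⟩, (mem_swapSet _).2 hmem, (adj_iff _ _).2 hva⟩

lemma not_levelable {m : ℕ} (hm : m ≠ 1) : ¬ (SimpleGraph.cycleGraph (m + 6)).Levelable := by
  rintro ⟨c, k, hc, hk⟩
  have rel : ∀ i : Fin (m + 6), c (⟨3, by omega⟩ + i) =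
      c (⟨2, by omega⟩ + i) + c (⟨4, by omega⟩ + i) := by
    intro i
    have h1 := hk _ (evenSet_rotate m i)
    have h2 := hk _ (swapSet_rotate hm i)
    rw [Finset.sum_map, evenSet, Finset.sum_insert (by simp [core]),
      Finset.sum_insert (by simp [core])] at h1
    rw [Finset.sum_map, swapSet, Finset.sum_insert (by simp [core])] at h2
    simp only [Equiv.coe_toEmbedding, Equiv.coe_addRight] at h1 h2
    omega
  have hsum := Finset.sum_congr (rfl : (Finset.univ : Finset (Fin (m + 6))) = Finset.univ)
    fun i _ => rel i
  have tot : ∀ a : Fin (m + 6), ∑ i, c (a + i) = ∑ i, c i := fun a =>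
    Equiv.sum_comp (Equiv.addLeft a) c
  rw [Finset.sum_add_distrib, tot, tot, tot] at hsum
  have hpos : 0 < ∑ i, c i := Finset.sum_pos (fun i _ => hc i) Finset.univ_nonempty
  omega

end CycleLevel

open CycleLevel in
theorem cycleGraph_levelable_iff (n : ℕ) (hn : 3 ≤ n) :
    (SimpleGraph.cycleGraph n).Levelable ↔ n ∈ ({3, 4, 5, 7} : Set ℕ) := by
  simp only [Set.mem_insert_iff, Set.mem_singleton_iff]
  constructor
  · intro h
    by_contra hne
    obtain ⟨m, rfl⟩ : ∃ m, n = m + 6 := ⟨n - 6, by omega⟩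
    exact not_levelable (by omega) h
  · rintro (rfl | rfl | rfl | rfl)
    · exact levelable_of_card 1 (by simp only [SimpleGraph.cycleGraph_adj']; decide +kernel)
    · exact levelable_of_card 2 (by simp only [SimpleGraph.cycleGraph_adj']; decide +kernel)
    · exact levelable_of_card 2 (by simp only [SimpleGraph.cycleGraph_adj']; decide +kernel)
    · exact levelable_of_card 3 (by simp only [SimpleGraph.cycleGraph_adj']; decide +kernel)
end

section
/- Let n ≥ 2 and let G = C_{2n}(1, n) be the circulant graph on the vertex set ℤ/2nℤ in which distinct vertices i and j are adjacent exactly when i − j ≡ ±1 (mod 2n) or i − j ≡ n (mod 2n). Then G is levelable if and only if n ∈ {2, 3, 4}. -/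
/-!
For `n ≥ 5` every vertex `v` can be isolated together with its three neighbours: the vertices
`v + n + 2` and `v + n - 2` are non-adjacent, neither is adjacent to `v`, and together they
dominate every vertex at distance two from `v`, namely `v ± 2` and `v + n ± 1`. Take a maximal
independent set containing these two vertices and `v`; replacing `v` by its three pairwise
non-adjacent neighbours gives another maximal independent set (`weight_eq_sum_of_isolated_star`).
A levelling weight `c` therefore satisfies `c v = c (v + 1) + c (v - 1) + c (v + n)` for all `v`
(`weight_eq_neighbors`). In particular `c v > c (v + 1)` and `c (v + 1) > c v`, which is absurd.

For `n = 2, 3, 4` the graph (`K₄`, `K₃,₃` and the Wagner graph) is well-covered, so the constant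
weight `1` works.
-/

open Finset

section General

variable {V : Type*} {G : SimpleGraph V}

theorem SimpleGraph.IsMaxIndepFinset.exists_adj {M : Finset V}
    (hM : G.IsMaxIndepFinset M) {x : V} (hx : x ∉ M) : ∃ m ∈ M, G.Adj m x := by
  classical
  by_contra! h
  refine hx ?_
  rw [← hM.2 (insert x M) ?_ (subset_insert x M)]
  · exact mem_insert_self x M
  · intro u hu w hw huw
    rw [mem_insert] at hu hw
    rcases hu with rfl | hu <;> rcases hw with rfl | hw
    · exact G.loopless.irrefl _ huw
    · exact h w hw huw.symm
    · exact h u hu huw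
    · exact hM.1 u hu w hw huw

theorem SimpleGraph.IsIndepFinset.exists_isMax [Finite V] {I : Finset V}
    (hI : G.IsIndepFinset I) : ∃ M, I ⊆ M ∧ G.IsMaxIndepFinset M := by
  obtain ⟨M, hIM, hM⟩ := (Set.toFinite {W : Finset V | G.IsIndepFinset W}).exists_le_maximal hI
  exact ⟨M, hIM, hM.1, fun U hU hMU => (hM.2 hU hMU).antisymm hMU⟩

/-- Let `L` be the neighbourhood of `v`, assumed independent and nonempty, and let `I` be a set
such that `I ∪ {v}` is independent and `I` dominates every vertex other than `v` adjacent to `L`.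
Then a levelling weight satisfies `c v = ∑ l ∈ L, c l`: in a maximal independent set containing
`I ∪ {v}`, the vertex `v` can be exchanged for `L`. -/
theorem weight_eq_sum_of_isolated_star [Finite V] [DecidableEq V] {c : V → ℕ} {k : ℕ}
    (hc : ∀ W : Finset V, G.IsMaxIndepFinset W → ∑ v ∈ W, c v = k)
    {v : V} {L I : Finset V} (hL : ∀ x, x ∈ L ↔ G.Adj v x) (hne : L.Nonempty)
    (hLi : G.IsIndepFinset L) (hI : G.IsIndepFinset (insert v I))
    (hdom : ∀ l ∈ L, ∀ x, G.Adj l x → x ≠ v → ∃ i ∈ I, G.Adj i x) :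
    c v = ∑ l ∈ L, c l := by
  obtain ⟨M, hIM, hM⟩ := hI.exists_isMax
  have hvM : v ∈ M := hIM (mem_insert_self v I)
  have hcross : ∀ l ∈ L, ∀ x ∈ M.erase v, ¬ G.Adj l x := by
    intro l hl x hx hlx
    rw [mem_erase] at hx
    obtain ⟨i, hi, hix⟩ := hdom l hl x hlx hx.1
    exact hM.1 i (hIM (mem_insert_of_mem hi)) x hx.2 hix
  have hM' : G.IsMaxIndepFinset (M.erase v ∪ L) := by
    refine ⟨?_, fun U hU hsub => Subset.antisymm (fun x hx => ?_) hsub⟩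
    · intro u hu w hw huw
      rw [mem_union] at hu hw
      rcases hu with hu | hu <;> rcases hw with hw | hw
      · exact hM.1 u (mem_of_mem_erase hu) w (mem_of_mem_erase hw) huw
      · exact hcross w hw u hu huw.symm
      · exact hcross u hu w hw huw
      · exact hLi u hu w hw huw
    · by_contra hx'
      rw [mem_union, not_or, mem_erase, not_and] at hx'
      have hxv : x ≠ v := by
        rintro rfl
        obtain ⟨l, hl⟩ := hne
        exact hU x hx l (hsub (mem_union_right _ hl)) ((hL l).1 hl)
      obtain ⟨m, hm, hmx⟩ := hM.exists_adj (hx'.1 hxv)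
      by_cases hmv : m = v
      · subst hmv
        exact hx'.2 ((hL x).2 hmx)
      · exact hU m (hsub (mem_union_left _ (mem_erase.2 ⟨hmv, hm⟩))) x hx hmx
  have hdisj : Disjoint (M.erase v) L := by
    rw [disjoint_left]
    intro x hx hxL
    exact hM.1 v hvM x (mem_of_mem_erase hx) ((hL x).1 hxL)
  have h1 := hc _ hM'
  rw [sum_union hdisj] at h1
  have h2 := hc M hM
  rw [← add_sum_erase M c hvM] at h2
  omega

/-- A well-covered graph is levelable, with constant weight `1`. Maximality enters only through
domination, which keeps the hypothesis decidable at low cost. -/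
theorem levelable_of_wellCovered (k : ℕ)
    (h : ∀ W : Finset V, (∀ u ∈ W, ∀ w ∈ W, ¬ G.Adj u w) →
      (∀ x, x ∉ W → ∃ m ∈ W, G.Adj m x) → W.card = k) : G.Levelable :=
  ⟨fun _ => 1, k, fun _ => le_rfl, fun W hW => by
    simpa using h W hW.1 fun x hx => hW.exists_adj hx⟩

end General

/-- The graph `C_{2n}(1, n)`. -/
abbrev cubicCirculantOne (n : ℕ) : SimpleGraph (ZMod (2 * n)) :=
  SimpleGraph.circulantGraph ({1, (n : ZMod (2 * n))} : Set (ZMod (2 * n)))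

theorem cubicCirculantOne_adj {n : ℕ} {u w : ZMod (2 * n)} :
    (cubicCirculantOne n).Adj u w ↔
      u ≠ w ∧ ((u - w = 1 ∨ u - w = n) ∨ (w - u = 1 ∨ w - u = n)) := by
  simp [SimpleGraph.circulantGraph]

/-- The modulus `m` is kept separate from `2 * n`, so that for numerals the hypothesis is a closed
statement over `ZMod m` whose decidability instances are found. -/
theorem circulantGraph_levelable_of_wellCovered (m n k : ℕ)
    (h : ∀ W : Finset (ZMod m),
      (∀ u ∈ W, ∀ w ∈ W, ¬ (u ≠ w ∧ ((u - w = 1 ∨ u - w = n) ∨ (w - u = 1 ∨ w - u = n)))) →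
      (∀ x, x ∉ W → ∃ y ∈ W, y ≠ x ∧ ((y - x = 1 ∨ y - x = n) ∨ (x - y = 1 ∨ x - y = n))) →
      W.card = k) :
    (SimpleGraph.circulantGraph ({1, (n : ZMod m)} : Set (ZMod m))).Levelable := by
  refine levelable_of_wellCovered k ?_
  simpa only [SimpleGraph.circulantGraph, SimpleGraph.fromRel_adj, Set.mem_insert_iff,
    Set.mem_singleton_iff] using h

theorem intCast_eq_zero_cases {n : ℕ} (z : ℤ) (h : (z : ZMod (2 * n)) = 0) :
    z = 0 ∨ z = 2 * n ∨ z = -(2 * n) ∨ 4 * n ≤ z ∨ z ≤ -(4 * n) := by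
  rw [ZMod.intCast_zmod_eq_zero_iff_dvd] at h
  obtain ⟨k, rfl⟩ := h
  push_cast
  rcases lt_trichotomy k 0 with hk | rfl | hk
  · rcases (show k = -1 ∨ k ≤ -2 by omega) with rfl | hk
    · right; right; left; ring
    · right; right; right; right; nlinarith
  · left; ring
  · rcases (show k = 1 ∨ 2 ≤ k by omega) with rfl | hk
    · right; left; ring
    · right; right; right; left; nlinarith

/-- Equality of two translates of `v` by nearby integers, as a statement of linear integer
arithmetic. -/
theorem translate_eq_iff {n : ℕ} (v : ZMod (2 * n)) (a b : ℤ)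
    (hab : -(3 * n) < a - b ∧ a - b < 3 * n) :
    v + a = v + b ↔ a - b = 0 ∨ a - b = 2 * n ∨ a - b = -(2 * n) := by
  have h2n : ((2 * n : ℤ) : ZMod (2 * n)) = 0 := by
    exact_mod_cast ZMod.natCast_self (2 * n)
  rw [add_right_inj, ← sub_eq_zero, ← Int.cast_sub]
  constructor
  · intro h
    have := intCast_eq_zero_cases _ h
    omega
  · rintro (h | h | h) <;> rw [h]
    · simp
    · exact h2n
    · rw [Int.cast_neg, h2n, neg_zero]

/-- Adjacency of two translates of `v` by nearby integers, as a statement of linear integer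
arithmetic. -/
theorem translate_adj_iff {n : ℕ} (hn : 5 ≤ n) (v : ZMod (2 * n)) (a b : ℤ)
    (hab : -(2 * n) < a - b ∧ a - b < 2 * n) :
    (cubicCirculantOne n).Adj (v + a) (v + b) ↔
      (a - b = 1 ∨ a - b = -1) ∨ (a - b = n ∨ a - b = -n) ∨
        (a - b = 2 * n - 1 ∨ a - b = -(2 * n - 1)) := by
  have key : ∀ a b d : ℤ, v + a - (v + b) = d ↔ v + a = v + (b + d : ℤ) := by
    intro a b d
    rw [sub_eq_iff_eq_add, Int.cast_add]
    constructor <;> intro h <;> rw [h] <;> ring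
  have k1 := fun a b => key a b 1
  have kn := fun a b => key a b n
  rw [Int.cast_one] at k1
  rw [Int.cast_natCast] at kn
  rw [cubicCirculantOne_adj, Ne, k1, kn, k1, kn]
  rw [translate_eq_iff _ _ _ (by omega),
    translate_eq_iff _ _ _ (by omega),
    translate_eq_iff _ _ _ (by omega),
    translate_eq_iff _ _ _ (by omega),
    translate_eq_iff _ _ _ (by omega)]
  omega

theorem adj_iff_translate {n : ℕ} (hn : 5 ≤ n) (u w : ZMod (2 * n)) :
    (cubicCirculantOne n).Adj u w ↔ w = u + (1 : ℤ) ∨ w = u + (-1 : ℤ) ∨ w = u + (n : ℤ) := by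
  have h2n : (n : ZMod (2 * n)) + n = 0 := by
    have := ZMod.natCast_self (2 * n)
    push_cast at this
    linear_combination this
  constructor
  · rw [cubicCirculantOne_adj]
    push_cast
    rintro ⟨-, (h | h) | (h | h)⟩
    · right; left; linear_combination -h
    · right; right; linear_combination -h - h2n
    · left; linear_combination h
    · right; right; linear_combination h
  · have h := fun b hb => translate_adj_iff hn u 0 b hb
    simp only [Int.cast_zero, add_zero] at h
    rintro (rfl | rfl | rfl)
    · rw [h _ (by omega)]; simp
    · rw [h _ (by omega)]; simp
    · rw [h _ (by omega)]; simp

theorem weight_eq_neighbors {n : ℕ} (hn : 5 ≤ n) {c : ZMod (2 * n) → ℕ} {k : ℕ}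
    (hc : ∀ W, (cubicCirculantOne n).IsMaxIndepFinset W → ∑ v ∈ W, c v = k)
    (v : ZMod (2 * n)) :
    c v = c (v + (1 : ℤ)) + c (v + (-1 : ℤ)) + c (v + (n : ℤ)) := by
  have : NeZero (2 * n) := ⟨by omega⟩
  have adj := translate_adj_iff hn v
  have eq := translate_eq_iff v
  have hL : ∀ x, x ∈ ({v + (1 : ℤ), v + (-1 : ℤ), v + (n : ℤ)} : Finset (ZMod (2 * n))) ↔
      (cubicCirculantOne n).Adj v x := by
    intro x
    rw [adj_iff_translate hn]
    simp only [mem_insert, mem_singleton]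
  have hv : v = v + (0 : ℤ) := by simp
  have := weight_eq_sum_of_isolated_star hc hL ⟨_, mem_insert_self _ _⟩
    (I := {v + (n + 2 : ℤ), v + (n - 2 : ℤ)}) ?_ ?_ ?_
  · rw [this, sum_insert, sum_insert, sum_singleton, add_assoc]
    · rw [mem_singleton, eq _ _ (by omega)]
      omega
    · rw [mem_insert, mem_singleton, eq _ _ (by omega),
        eq _ _ (by omega)]
      omega
  · intro u hu w hw
    simp only [mem_insert, mem_singleton] at hu hw
    rcases hu with rfl | rfl | rfl <;> rcases hw with rfl | rfl | rfl <;>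
      (rw [adj _ _ (by omega)]; omega)
  · intro u hu w hw
    simp only [mem_insert, mem_singleton] at hu hw
    have hu' : ∃ a : ℤ, u = v + a ∧ (a = 0 ∨ a = n + 2 ∨ a = n - 2) := by
      rcases hu with h | h | h
      · exact ⟨0, h.trans hv, by simp⟩
      · exact ⟨_, h, by simp⟩
      · exact ⟨_, h, by simp⟩
    have hw' : ∃ a : ℤ, w = v + a ∧ (a = 0 ∨ a = n + 2 ∨ a = n - 2) := by
      rcases hw with h | h | h
      · exact ⟨0, h.trans hv, by simp⟩
      · exact ⟨_, h, by simp⟩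
      · exact ⟨_, h, by simp⟩
    obtain ⟨a, rfl, ha⟩ := hu'
    obtain ⟨b, rfl, hb⟩ := hw'
    rw [adj _ _ (by omega)]
    omega
  · intro l hl x hlx hxv
    simp only [mem_insert, mem_singleton] at hl
    rw [adj_iff_translate hn] at hlx
    have hx : ∃ a : ℤ, x = v + a ∧
        (a = 0 ∨ a = 2 ∨ a = -2 ∨ a = n + 1 ∨ a = n - 1 ∨ a = 2 * n) := by
      rcases hl with rfl | rfl | rfl <;> rcases hlx with h | h | h <;>
        refine ⟨_, by rw [h, add_assoc, ← Int.cast_add], by omega⟩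
    obtain ⟨a, rfl, ha⟩ := hx
    have h0 : a ≠ 0 ∧ a ≠ 2 * n := by
      constructor <;> intro h <;> apply hxv <;> conv_rhs => rw [hv]
      all_goals
        rw [eq _ _ (by omega)]
        omega
    -- The dominating vertex lies on the same side of `v` as `x`.
    by_cases hs : a = 2 ∨ a = n + 1
    · refine ⟨v + (n + 2 : ℤ), by push_cast; simp, ?_⟩
      have := adj (n + 2) a (by omega)
      push_cast at this ⊢
      rw [this]
      omega
    · refine ⟨v + (n - 2 : ℤ), by push_cast; simp, ?_⟩
      have := adj (n - 2) a (by omega)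
      push_cast at this ⊢
      rw [this]
      omega

theorem cubicCirculant_one_levelable_iff (n : ℕ) (hn : 2 ≤ n) :
    (SimpleGraph.circulantGraph ({1, (n : ZMod (2 * n))} : Set (ZMod (2 * n)))).Levelable ↔
      n ∈ ({2, 3, 4} : Set ℕ) := by
  constructor
  · rintro ⟨c, k, hpos, hc⟩
    by_contra hmem
    simp only [Set.mem_insert_iff, Set.mem_singleton_iff] at hmem
    have hn5 : 5 ≤ n := by omega
    have h0 := weight_eq_neighbors hn5 hc 0
    have h1 := weight_eq_neighbors hn5 hc (0 + (1 : ℤ))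
    have hback : (0 + (1 : ℤ) + (-1 : ℤ) : ZMod (2 * n)) = 0 := by push_cast; ring
    rw [hback] at h1
    have h2 := hpos (0 + (n : ℤ))
    omega
  · intro h
    simp only [Set.mem_insert_iff, Set.mem_singleton_iff] at h
    rcases h with rfl | rfl | rfl
    · exact circulantGraph_levelable_of_wellCovered 4 2 1 (by decide +kernel)
    · exact circulantGraph_levelable_of_wellCovered 6 3 3 (by decide +kernel)
    · exact circulantGraph_levelable_of_wellCovered 8 4 3 (by decide +kernel)
end
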